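/- arXiv:1801.08733 — 2 statements merged into one kernel-verified Lean document; each statement's English description precedes it below -/
import Mathlib

section
/- There exists a function ε(n) tending to 0 as n → ∞ such that for all sufficiently large n, every multiplicative 3-Sidon subset A of {1,2,…,n} satisfies |A| ≤ π(n) + π(n/2) + n^{2/3}(log n)^{2^{1/3} − 1/3 + ε(n)}. Equivalently: for every ε > 0 there exists N such that for all n ≥ N, every multiplicative 3-Sidon subset A of {1,2,…,n} satisfies |A| ≤ π(n) + π(n/2) + n^{2/3}(log n)^{2^{1/3} − 1/3 + ε}. -/
/-- A finite set of naturals is a multiplicative 3-Sidon set if there do not exist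
pairwise distinct elements `s₁, s₂, s₃, t₁, t₂, t₃` of it with `s₁s₂s₃ = t₁t₂t₃`. -/
def MulSidon3 (A : Finset ℕ) : Prop :=
  ¬ ∃ s₁ s₂ s₃ t₁ t₂ t₃ : ℕ, s₁ ∈ A ∧ s₂ ∈ A ∧ s₃ ∈ A ∧ t₁ ∈ A ∧ t₂ ∈ A ∧ t₃ ∈ A ∧
    ([s₁, s₂, s₃, t₁, t₂, t₃] : List ℕ).Nodup ∧ s₁ * s₂ * s₃ = t₁ * t₂ * t₃


def C6Free (E : Finset (ℕ × ℕ)) : Prop :=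
  ∀ x₁ x₂ x₃ y₁ y₂ y₃ : ℕ, x₁ ≠ x₂ → x₁ ≠ x₃ → x₂ ≠ x₃ → y₁ ≠ y₂ → y₁ ≠ y₃ → y₂ ≠ y₃ →
    (x₁, y₁) ∈ E → (x₂, y₁) ∈ E → (x₂, y₂) ∈ E → (x₃, y₂) ∈ E → (x₃, y₃) ∈ E →
    (x₁, y₃) ∈ E → False

theorem c6free_image {A A' : Finset ℕ} (hA : MulSidon3 A) (hs : A' ⊆ A) (f g : ℕ → ℕ)
    (hfg : ∀ a ∈ A', f a * g a = a) : C6Free (A'.image fun a => (f a, g a)) := by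
  have key : ∀ x y, (x, y) ∈ A'.image (fun a => (f a, g a)) →
      x * y ∈ A' ∧ f (x * y) = x ∧ g (x * y) = y := by
    intro x y h
    simp only [Finset.mem_image, Prod.mk.injEq] at h
    obtain ⟨a, ha, rfl, rfl⟩ := h
    rw [hfg a ha]
    exact ⟨ha, rfl, rfl⟩
  have inj : ∀ x y x' y', (x, y) ∈ A'.image (fun a => (f a, g a)) →
      (x', y') ∈ A'.image (fun a => (f a, g a)) → x * y = x' * y' → x = x' ∧ y = y' := by
    intro x y x' y' h h' e
    obtain ⟨_, h1, h2⟩ := key _ _ h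
    obtain ⟨_, h1', h2'⟩ := key _ _ h'
    rw [e] at h1 h2
    exact ⟨h1.symm.trans h1', h2.symm.trans h2'⟩
  intro x₁ x₂ x₃ y₁ y₂ y₃ a1 a2 a3 b1 b2 b3 h1 h2 h3 h4 h5 h6
  apply hA
  refine ⟨x₁ * y₁, x₂ * y₂, x₃ * y₃, x₂ * y₁, x₃ * y₂, x₁ * y₃, hs (key _ _ h1).1,
    hs (key _ _ h3).1, hs (key _ _ h5).1, hs (key _ _ h2).1, hs (key _ _ h4).1,
    hs (key _ _ h6).1, ?_, by ring⟩
  have i13 := inj _ _ _ _ h1 h3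
  have i15 := inj _ _ _ _ h1 h5
  have i12 := inj _ _ _ _ h1 h2
  have i14 := inj _ _ _ _ h1 h4
  have i16 := inj _ _ _ _ h1 h6
  have i35 := inj _ _ _ _ h3 h5
  have i32 := inj _ _ _ _ h3 h2
  have i34 := inj _ _ _ _ h3 h4
  have i36 := inj _ _ _ _ h3 h6
  have i52 := inj _ _ _ _ h5 h2
  have i54 := inj _ _ _ _ h5 h4
  have i56 := inj _ _ _ _ h5 h6
  have i24 := inj _ _ _ _ h2 h4
  have i26 := inj _ _ _ _ h2 h6
  have i46 := inj _ _ _ _ h4 h6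
  clear inj key h1 h2 h3 h4 h5 h6
  simp only [List.nodup_cons, List.mem_cons, List.not_mem_nil, or_false, not_or,
    List.nodup_nil, not_false_eq_true, and_true]
  refine ⟨⟨?_, ?_, ?_, ?_, ?_⟩, ⟨?_, ?_, ?_, ?_⟩, ⟨?_, ?_, ?_⟩, ⟨?_, ?_⟩, ?_⟩
  · exact fun h => a1 (i13 h).1
  · exact fun h => a2 (i15 h).1
  · exact fun h => a1 (i12 h).1
  · exact fun h => a2 (i14 h).1
  · exact fun h => b2 (i16 h).2
  · exact fun h => a3 (i35 h).1
  · exact fun h => b1 (i32 h).2.symm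
  · exact fun h => a3 (i34 h).1
  · exact fun h => a1 (i36 h).1.symm
  · exact fun h => a3 (i52 h).1.symm
  · exact fun h => b3 (i54 h).2.symm
  · exact fun h => a2 (i56 h).1.symm
  · exact fun h => a3 (i24 h).1
  · exact fun h => a1 (i26 h).1.symm
  · exact fun h => a2 (i46 h).1.symm

theorem C6Free.swap {E : Finset (ℕ × ℕ)} (h : C6Free E) : C6Free (E.image Prod.swap) := by
  have key : ∀ x y, (x, y) ∈ E.image Prod.swap → (y, x) ∈ E := by
    intro x y h; simpa using h
  intro x₁ x₂ x₃ y₁ y₂ y₃ a1 a2 a3 b1 b2 b3 h1 h2 h3 h4 h5 h6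
  exact h y₁ y₂ y₃ x₂ x₃ x₁ b1 b2 b3 a3 a1.symm a2.symm (key _ _ h2) (key _ _ h3)
    (key _ _ h4) (key _ _ h5) (key _ _ h6) (key _ _ h1)

/-- neighbours of `x` on the right side -/
def nR (E : Finset (ℕ × ℕ)) (x : ℕ) : Finset ℕ := (E.filter fun e => e.1 = x).image Prod.snd
/-- neighbours of `y` on the left side -/
def nL (E : Finset (ℕ × ℕ)) (y : ℕ) : Finset ℕ := (E.filter fun e => e.2 = y).image Prod.fst

theorem mem_nR {E : Finset (ℕ × ℕ)} {x y : ℕ} : y ∈ nR E x ↔ (x, y) ∈ E := by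
  simp [nR]
theorem mem_nL {E : Finset (ℕ × ℕ)} {x y : ℕ} : x ∈ nL E y ↔ (x, y) ∈ E := by
  simp [nL]

theorem nL_swap (E : Finset (ℕ × ℕ)) (x : ℕ) : nL (E.image Prod.swap) x = nR E x := by
  ext y; rw [mem_nL, mem_nR]; simp
theorem nR_swap (E : Finset (ℕ × ℕ)) (x : ℕ) : nR (E.image Prod.swap) x = nL E x := by
  ext y; rw [mem_nL, mem_nR]; simp

/-- for an edge `(x,y)`, the `x' ≠ x` adjacent to `y` with small codegree with `x`. -/
def gL (E : Finset (ℕ × ℕ)) (x y : ℕ) : Finset ℕ :=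
  (nL E y).filter fun x' => x' ≠ x ∧ (nR E x ∩ nR E x').card ≤ 2
def gR (E : Finset (ℕ × ℕ)) (x y : ℕ) : Finset ℕ :=
  (nR E x).filter fun y' => y' ≠ y ∧ (nL E y ∩ nL E y').card ≤ 2

theorem gL_card {E : Finset (ℕ × ℕ)} (h : C6Free E) {x y : ℕ} (hxy : (x, y) ∈ E) :
    (nL E y).card ≤ (gL E x y).card + 2 := by
  classical
  set B := (nL E y).filter fun x' => x' ≠ x ∧ ¬ (nR E x ∩ nR E x').card ≤ 2 with hB
  have hB1 : B.card ≤ 1 := by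
    rw [Finset.card_le_one]
    intro a ha b hb
    by_contra hab
    simp only [hB, Finset.mem_filter, not_le, mem_nL] at ha hb
    obtain ⟨hay, hax, hac⟩ := ha
    obtain ⟨hby, hbx, hbc⟩ := hb
    have h1 : ∃ y1 ∈ nR E x ∩ nR E a, y1 ∉ ({y} : Finset ℕ) := by
      apply Finset.exists_mem_notMem_of_card_lt_card
      simp; omega
    obtain ⟨y1, hy1, hy1y⟩ := h1
    have h2 : ∃ y2 ∈ nR E x ∩ nR E b, y2 ∉ ({y, y1} : Finset ℕ) := by
      apply Finset.exists_mem_notMem_of_card_lt_card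
      exact lt_of_le_of_lt (Finset.card_le_two) hbc
    obtain ⟨y2, hy2, hy2y⟩ := h2
    simp only [Finset.mem_inter, mem_nR] at hy1 hy2
    simp only [Finset.mem_insert, Finset.mem_singleton, not_or] at hy1y hy2y
    exact h a x b y1 y2 y hax hab (Ne.symm hbx) (Ne.symm hy2y.2) hy1y hy2y.1 hy1.2 hy1.1
      hy2.1 hy2.2 hby hay
  have hsub : nL E y ⊆ gL E x y ∪ (B ∪ {x}) := by
    intro a ha
    simp only [gL, hB, Finset.mem_union, Finset.mem_filter, Finset.mem_singleton]
    tauto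
  calc _ ≤ _ := Finset.card_le_card hsub
    _ ≤ (gL E x y).card + (B ∪ {x}).card := Finset.card_union_le _ _
    _ ≤ (gL E x y).card + (B.card + ({x} : Finset ℕ).card) := by
        gcongr; exact Finset.card_union_le _ _
    _ ≤ _ := by simp; omega

theorem gL_swap (E : Finset (ℕ × ℕ)) (x y : ℕ) : gL (E.image Prod.swap) y x = gR E x y := by
  simp only [gL, gR, nL_swap, nR_swap]

theorem gR_card {E : Finset (ℕ × ℕ)} (h : C6Free E) {x y : ℕ} (hxy : (x, y) ∈ E) :
    (nR E x).card ≤ (gR E x y).card + 2 := by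
  have := gL_card h.swap (x := y) (y := x) (by simpa using hxy)
  rwa [gL_swap, nL_swap] at this

/-- middle edges of good 3-paths with given ends -/
theorem paths_le {E : Finset (ℕ × ℕ)} (h : C6Free E) (x' y' : ℕ) :
    (E.filter fun e => x' ∈ gL E e.1 e.2 ∧ y' ∈ gR E e.1 e.2).card ≤ 2 := by
  classical
  set P := E.filter fun e => x' ∈ gL E e.1 e.2 ∧ y' ∈ gR E e.1 e.2 with hP
  have hmem : ∀ x y, (x, y) ∈ P → (x, y) ∈ E ∧ (x', y) ∈ E ∧ x' ≠ x ∧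
      (nR E x ∩ nR E x').card ≤ 2 ∧ (x, y') ∈ E ∧ y' ≠ y ∧ (nL E y ∩ nL E y').card ≤ 2 := by
    intro x y hh
    simpa [hP, gL, gR, mem_nL, mem_nR, and_assoc] using hh
  have disj : ∀ x y u v, (x, y) ∈ P → (u, v) ∈ P → x = u ∨ y = v := by
    intro x y u v h1 h2
    by_contra hc
    push Not at hc
    obtain ⟨e1, e2, e3, -, e5, e6, -⟩ := hmem _ _ h1
    obtain ⟨f1, f2, f3, -, f5, f6, -⟩ := hmem _ _ h2
    exact h x' x u y y' v e3 f3 hc.1 (Ne.symm e6) hc.2 f6 e2 e1 e5 f5 f1 f2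
  by_contra hlt
  push Not at hlt
  -- either all have the same x or all have the same y
  have star : (∀ e ∈ P, ∀ f ∈ P, e.1 = f.1) ∨ (∀ e ∈ P, ∀ f ∈ P, e.2 = f.2) := by
    by_contra hc
    push Not at hc
    obtain ⟨⟨⟨a, b⟩, h1, ⟨c, d⟩, h2, h12⟩, ⟨⟨a', b'⟩, h3, ⟨c', d'⟩, h4, h34⟩⟩ := hc
    have := disj _ _ _ _ h1 h2
    have := disj _ _ _ _ h1 h3
    have := disj _ _ _ _ h1 h4
    have := disj _ _ _ _ h2 h3
    have := disj _ _ _ _ h2 h4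
    have := disj _ _ _ _ h3 h4
    simp only at *
    grind
  have hne : P.Nonempty := Finset.card_pos.mp (by omega)
  obtain ⟨⟨x, y⟩, hxy⟩ := hne
  rcases star with hs | hs
  · have hle : P.card ≤ (nR E x ∩ nR E x').card := by
      apply Finset.card_le_card_of_injOn Prod.snd
      · rintro ⟨a, b⟩ hab
        have e : a = x := hs _ hab _ hxy
        subst e
        obtain ⟨e1, e2, -⟩ := hmem _ _ hab
        simp [mem_nR, e1, e2]
      · intro e he f hf hef
        exact Prod.ext (hs _ he _ hf) hef
    have := (hmem _ _ hxy).2.2.2.1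
    omega
  · have hle : P.card ≤ (nL E y ∩ nL E y').card := by
      apply Finset.card_le_card_of_injOn Prod.fst
      · rintro ⟨a, b⟩ hab
        have e : b = y := hs _ hab _ hxy
        subst e
        obtain ⟨e1, e2, -, -, e5, -⟩ := hmem _ _ hab
        simp [mem_nL, e1, e5]
      · intro e he f hf hef
        exact Prod.ext hef (hs _ he _ hf)
    have := (hmem _ _ hxy).2.2.2.2.2.2
    omega

theorem sum_paths {E : Finset (ℕ × ℕ)} (h : C6Free E) {X Y : Finset ℕ} (hE : E ⊆ X ×ˢ Y) :
    ∑ e ∈ E, (gL E e.1 e.2).card * (gR E e.1 e.2).card ≤ 2 * (X.card * Y.card) := by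
  classical
  have h1 : ∀ e ∈ E, (gL E e.1 e.2).card * (gR E e.1 e.2).card =
      ((X ×ˢ Y).filter fun q => q.1 ∈ gL E e.1 e.2 ∧ q.2 ∈ gR E e.1 e.2).card := by
    intro e he
    rw [← Finset.card_product]
    congr 1
    ext ⟨a, b⟩
    simp only [Finset.mem_product, Finset.mem_filter]
    constructor
    · intro hab
      refine ⟨?_, hab⟩
      have ha : (a, e.2) ∈ E := mem_nL.mp (Finset.mem_filter.mp hab.1).1
      have hb : (e.1, b) ∈ E := mem_nR.mp (Finset.mem_filter.mp hab.2).1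
      exact ⟨(Finset.mem_product.mp (hE ha)).1, (Finset.mem_product.mp (hE hb)).2⟩
    · exact fun hh => hh.2
  rw [Finset.sum_congr rfl h1]
  simp only [Finset.card_filter]
  rw [Finset.sum_comm]
  simp only [← Finset.card_filter]
  calc _ ≤ ∑ q ∈ X ×ˢ Y, 2 := Finset.sum_le_sum fun q _ => paths_le h q.1 q.2
    _ = _ := by simp [mul_comm]

theorem C6Free.card_le {E : Finset (ℕ × ℕ)} (h : C6Free E) {X Y : Finset ℕ}
    (hE : E ⊆ X ×ˢ Y) :
    (E.card : ℝ) ≤ 16 * (X.card + Y.card) + 7 * ((X.card : ℝ) * Y.card) ^ ((2 : ℝ) / 3) := by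
  classical
  by_contra hlt
  push Not at hlt
  set e : ℝ := (E.card : ℝ) with he
  set m : ℝ := (X.card : ℝ) with hm
  set k : ℝ := (Y.card : ℝ) with hk
  have hm0 : 0 ≤ m := by positivity
  have hk0 : 0 ≤ k := by positivity
  have hr0 : 0 ≤ (m * k) ^ ((2 : ℝ) / 3) := by positivity
  have hepos : 0 < e := by linarith
  have hEne : E.Nonempty := by
    rw [← Finset.card_pos]; rw [he] at hepos; exact_mod_cast hepos
  obtain ⟨e0, he0⟩ := hEne
  have hmpos : 0 < m := by
    rw [hm]; exact_mod_cast Finset.card_pos.mpr ⟨_, (Finset.mem_product.mp (hE he0)).1⟩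
  have hkpos : 0 < k := by
    rw [hk]; exact_mod_cast Finset.card_pos.mpr ⟨_, (Finset.mem_product.mp (hE he0)).2⟩
  -- edges with low degree
  set B1 := E.filter fun q => ((nR E q.1).card : ℝ) < e / (4 * m) with hB1
  set B2 := E.filter fun q => ((nL E q.2).card : ℝ) < e / (4 * k) with hB2
  set G := E.filter fun q => ¬ ((nR E q.1).card : ℝ) < e / (4 * m) ∧
    ¬ ((nL E q.2).card : ℝ) < e / (4 * k) with hG
  have b1 : (B1.card : ℝ) ≤ e / 4 := by
    have : B1.card = ∑ x ∈ X, (B1.filter fun q => q.1 = x).card :=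
      Finset.card_eq_sum_card_fiberwise fun q hq =>
        (Finset.mem_product.mp (hE (Finset.mem_filter.mp hq).1)).1
    rw [this]; push_cast
    calc _ ≤ ∑ x ∈ X, e / (4 * m) := by
          apply Finset.sum_le_sum
          intro x hx
          rcases (B1.filter fun q => q.1 = x).eq_empty_or_nonempty with h0 | ⟨q, hq⟩
          · rw [h0]; simp; positivity
          · simp only [hB1, Finset.mem_filter] at hq
            obtain ⟨⟨hq1, hq2⟩, rfl⟩ := hq
            refine le_trans ?_ hq2.le
            exact_mod_cast Finset.card_le_card_of_injOn Prod.snd (by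
              rintro ⟨a, b⟩ hab
              simp only [hB1, Finset.coe_filter, Set.mem_ofPred_eq, Finset.mem_filter] at hab
              obtain ⟨⟨h1, -⟩, h2⟩ := hab
              rw [← h2]
              exact mem_nR.mpr h1) (by
              rintro a ha b hb hab
              simp only [Finset.coe_filter, Set.mem_ofPred_eq] at ha hb
              exact Prod.ext (ha.2.trans hb.2.symm) hab)
      _ = e / 4 := by
          rw [Finset.sum_const, nsmul_eq_mul, ← hm]; field_simp
  have b2 : (B2.card : ℝ) ≤ e / 4 := by
    have : B2.card = ∑ y ∈ Y, (B2.filter fun q => q.2 = y).card :=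
      Finset.card_eq_sum_card_fiberwise fun q hq =>
        (Finset.mem_product.mp (hE (Finset.mem_filter.mp hq).1)).2
    rw [this]; push_cast
    calc _ ≤ ∑ y ∈ Y, e / (4 * k) := by
          apply Finset.sum_le_sum
          intro x hx
          rcases (B2.filter fun q => q.2 = x).eq_empty_or_nonempty with h0 | ⟨q, hq⟩
          · rw [h0]; simp; positivity
          · simp only [hB2, Finset.mem_filter] at hq
            obtain ⟨⟨hq1, hq2⟩, rfl⟩ := hq
            refine le_trans ?_ hq2.le
            exact_mod_cast Finset.card_le_card_of_injOn Prod.fst (by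
              rintro ⟨a, b⟩ hab
              simp only [hB2, Finset.coe_filter, Set.mem_ofPred_eq, Finset.mem_filter] at hab
              obtain ⟨⟨h1, -⟩, h2⟩ := hab
              rw [← h2]
              exact mem_nL.mpr h1) (by
              rintro a ha b hb hab
              simp only [Finset.coe_filter, Set.mem_ofPred_eq] at ha hb
              exact Prod.ext hab (ha.2.trans hb.2.symm))
      _ = e / 4 := by
          rw [Finset.sum_const, nsmul_eq_mul, ← hk]; field_simp
  have hcov : E ⊆ G ∪ (B1 ∪ B2) := by
    intro q hq
    simp only [hG, hB1, hB2, Finset.mem_union, Finset.mem_filter]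
    tauto
  have g1 : e / 2 ≤ (G.card : ℝ) := by
    have h1 := Finset.card_le_card hcov
    have h2 := Finset.card_union_le G (B1 ∪ B2)
    have h3 := Finset.card_union_le B1 B2
    have : (E.card : ℝ) ≤ G.card + (B1.card + B2.card) := by exact_mod_cast (by omega)
    linarith
  have hem : 4 ≤ e / (4 * m) := by
    rw [le_div_iff₀ (by positivity)]; nlinarith
  have hek : 4 ≤ e / (4 * k) := by
    rw [le_div_iff₀ (by positivity)]; nlinarith
  have low : (G.card : ℝ) * (e / (8 * m) * (e / (8 * k))) ≤
      ∑ q ∈ G, (((gL E q.1 q.2).card * (gR E q.1 q.2).card : ℕ) : ℝ) := by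
    rw [← nsmul_eq_mul]
    apply Finset.card_nsmul_le_sum
    intro q hq
    simp only [hG, Finset.mem_filter, not_lt] at hq
    obtain ⟨hqE, hq1, hq2⟩ := hq
    have l1 := gL_card h (x := q.1) (y := q.2) hqE
    have l2 := gR_card h (x := q.1) (y := q.2) hqE
    have l1' : ((nL E q.2).card : ℝ) ≤ (gL E q.1 q.2).card + 2 := by exact_mod_cast l1
    have l2' : ((nR E q.1).card : ℝ) ≤ (gR E q.1 q.2).card + 2 := by exact_mod_cast l2
    have r1 : e / (8 * m) = e / (4 * m) / 2 := by field_simp; norm_num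
    have r2 : e / (8 * k) = e / (4 * k) / 2 := by field_simp; norm_num
    push_cast
    rw [mul_comm]
    apply mul_le_mul <;> first | positivity | linarith
  have up : ∑ q ∈ G, (((gL E q.1 q.2).card * (gR E q.1 q.2).card : ℕ) : ℝ) ≤ 2 * (m * k) := by
    have h1 := sum_paths h hE
    have h2 : ∑ q ∈ G, (gL E q.1 q.2).card * (gR E q.1 q.2).card ≤
      ∑ q ∈ E, (gL E q.1 q.2).card * (gR E q.1 q.2).card :=
      Finset.sum_le_sum_of_subset (Finset.filter_subset _ _)
    rw [hm, hk]
    exact_mod_cast h2.trans h1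
  have hfin : e / 2 * (e / (8 * m) * (e / (8 * k))) ≤ 2 * (m * k) :=
    le_trans (mul_le_mul_of_nonneg_right g1 (by positivity)) (low.trans up)
  have hcube : e ^ 3 ≤ 256 * (m * k) ^ 2 := by
    have : e / 2 * (e / (8 * m) * (e / (8 * k))) = e ^ 3 / (128 * (m * k)) := by
      field_simp; norm_num
    rw [this, div_le_iff₀ (by positivity)] at hfin
    nlinarith
  have hr3 : ((m * k) ^ ((2 : ℝ) / 3)) ^ 3 = (m * k) ^ 2 := by
    rw [← Real.rpow_natCast, ← Real.rpow_mul (by positivity), ← Real.rpow_natCast]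
    norm_num
  have h7 : 7 * (m * k) ^ ((2 : ℝ) / 3) < e := by linarith
  have h73 : (7 * (m * k) ^ ((2 : ℝ) / 3)) ^ 3 < e ^ 3 := by gcongr
  rw [mul_pow, hr3] at h73
  have : 0 < (m * k) ^ 2 := by positivity
  nlinarith

/-- Győri-type bound. -/
theorem C6Free.gyori {E : Finset (ℕ × ℕ)} (h : C6Free E) {X Y : Finset ℕ}
    (hE : E ⊆ X ×ˢ Y) :
    ∑ x ∈ X, ((nR E x).card - 2) ≤ 2 * Y.card ^ 2 := by
  classical
  -- for x, pairs (y, y')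
  have h1 : ∀ x ∈ X, (nR E x).card - 2 ≤
      ((Y ×ˢ Y).filter fun q => (x, q.1) ∈ E ∧ q.2 ∈ gR E x q.1).card := by
    intro x hx
    rcases (nR E x).eq_empty_or_nonempty with h0 | ⟨y, hy⟩
    · simp [h0]
    · have hxy := mem_nR.mp hy
      have := gR_card h hxy
      refine le_trans (by omega : _ ≤ (gR E x y).card) ?_
      apply Finset.card_le_card_of_injOn (fun y' => (y, y'))
      · intro y' hy'
        have hy'' : (x, y') ∈ E := mem_nR.mp (Finset.mem_filter.mp hy').1
        simp only [Finset.coe_filter, Set.mem_ofPred_eq, Finset.mem_product]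
        exact ⟨⟨(Finset.mem_product.mp (hE hxy)).2, (Finset.mem_product.mp (hE hy'')).2⟩,
          hxy, hy'⟩
      · intro a _ b _ hab
        exact (Prod.mk.inj hab).2
  refine (Finset.sum_le_sum h1).trans ?_
  simp only [Finset.card_filter]
  rw [Finset.sum_comm]
  simp only [← Finset.card_filter]
  calc _ ≤ ∑ q ∈ Y ×ˢ Y, 2 := by
        apply Finset.sum_le_sum
        intro q _
        set P := X.filter fun x => (x, q.1) ∈ E ∧ q.2 ∈ gR E x q.1 with hP
        rcases P.eq_empty_or_nonempty with h0 | ⟨x, hx⟩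
        · simp [h0]
        · have hx2 := (Finset.mem_filter.mp (Finset.mem_filter.mp hx).2.2).2.2
          refine le_trans (Finset.card_le_card ?_) hx2
          intro z hz
          obtain ⟨-, hz1, hz2⟩ := Finset.mem_filter.mp hz
          rw [Finset.mem_inter, mem_nL, mem_nL]
          exact ⟨hz1, mem_nR.mp (Finset.mem_filter.mp hz2).1⟩
    _ = _ := by simp; ring


open Finset in
theorem sum_dvd_swap (N : ℕ) (S : Finset ℕ) (hS : S ⊆ Finset.Icc 1 N) (f : ℕ → ℝ) :
    ∑ u ∈ S, ∑ d ∈ u.divisors, f d = ∑ d ∈ Finset.Icc 1 N, f d * (S.filter (d ∣ ·)).card := by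
  have h1 : ∀ u ∈ S, ∑ d ∈ u.divisors, f d = ∑ d ∈ Finset.Icc 1 N, if d ∣ u then f d else 0 := by
    intro u hu
    have hu' := Finset.mem_Icc.mp (hS hu)
    rw [← Finset.sum_filter]
    apply Finset.sum_congr _ fun _ _ => rfl
    ext d
    simp only [Nat.mem_divisors, Finset.mem_filter, Finset.mem_Icc]
    constructor
    · rintro ⟨h, h0⟩
      exact ⟨⟨Nat.pos_of_dvd_of_pos h (by omega), (Nat.le_of_dvd (by omega) h).trans hu'.2⟩, h⟩
    · rintro ⟨_, h⟩
      exact ⟨h, by omega⟩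
  rw [Finset.sum_congr rfl h1, Finset.sum_comm]
  apply Finset.sum_congr rfl
  intro d _
  rw [← Finset.sum_filter, Finset.sum_const, nsmul_eq_mul, mul_comm]

/-- `y`-rough numbers up to `U`. -/
def roughS (y U : ℕ) : Finset ℕ :=
  (Finset.Icc 1 U).filter fun u => ∀ p ∈ u.primeFactors, y ≤ p
/-- `y`-smooth numbers up to `V`. -/
def smoothS (y V : ℕ) : Finset ℕ :=
  (Finset.Icc 1 V).filter fun u => ∀ p ∈ u.primeFactors, p < y

theorem sum_inv_Icc_eq (N : ℕ) : ∑ k ∈ Finset.Icc 1 N, (1 : ℝ) / k = (harmonic N : ℝ) := by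
  rw [harmonic_eq_sum_Icc]; push_cast; simp

theorem sum_inv_Icc_le (N : ℕ) : ∑ k ∈ Finset.Icc 1 N, (1 : ℝ) / k ≤ 1 + Real.log N := by
  rw [sum_inv_Icc_eq]; exact harmonic_le_one_add_log N

theorem rough_sum_inv (y U : ℕ) (hy : 1 ≤ y) :
    Real.log y * ∑ w ∈ roughS y U, (1 : ℝ) / w ≤ 1 + Real.log (y * U) := by
  have h1 : Real.log y ≤ ∑ m ∈ Finset.Icc 1 (y - 1), (1 : ℝ) / m := by
    rw [sum_inv_Icc_eq]
    have := log_add_one_le_harmonic (y - 1)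
    rwa [Nat.sub_add_cancel hy] at this
  have h0 : 0 ≤ ∑ w ∈ roughS y U, (1 : ℝ) / w := Finset.sum_nonneg fun _ _ => by positivity
  refine (mul_le_mul_of_nonneg_right h1 h0).trans ?_
  rw [Finset.sum_mul_sum, ← Finset.sum_product']
  have key : ∀ m w m' w' : ℕ, m ∈ Finset.Icc 1 (y - 1) → w' ∈ roughS y U → m * w = m' * w' →
      m ∣ m' := by
    intro m w m' w' hm hw h
    have hc : Nat.Coprime m w' := by
      apply Nat.coprime_of_dvd
      intro p hp h1 h2
      simp only [roughS, Finset.mem_filter, Finset.mem_Icc] at hw hm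
      have := hw.2 p (Nat.mem_primeFactors.mpr ⟨hp, h2, by omega⟩)
      have := Nat.le_of_dvd (by omega) h1
      omega
    exact hc.dvd_of_dvd_mul_right (h ▸ Dvd.intro _ rfl)
  have inj : Set.InjOn (fun q : ℕ × ℕ => q.1 * q.2)
      ((Finset.Icc 1 (y - 1) ×ˢ roughS y U : Finset (ℕ × ℕ)) : Set (ℕ × ℕ)) := by
    rintro ⟨m, w⟩ h ⟨m', w'⟩ h' e
    simp only [Finset.coe_product, Set.mem_prod, Finset.mem_coe] at h h' e
    have e1 : m = m' := Nat.dvd_antisymm (key _ _ _ _ h.1 h'.2 e) (key _ _ _ _ h'.1 h.2 e.symm)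
    subst e1
    have : 0 < m := by have := Finset.mem_Icc.mp h.1; omega
    rw [Nat.eq_of_mul_eq_mul_left this e]
  calc _ = ∑ q ∈ Finset.Icc 1 (y - 1) ×ˢ roughS y U, (1 : ℝ) / ((q.1 * q.2 : ℕ) : ℝ) := by
        apply Finset.sum_congr rfl
        intro q _
        push_cast
        rw [div_mul_div_comm, one_mul]
    _ = ∑ k ∈ (Finset.Icc 1 (y - 1) ×ˢ roughS y U).image (fun q => q.1 * q.2), (1 : ℝ) / k := by
        rw [Finset.sum_image inj]
    _ ≤ ∑ k ∈ Finset.Icc 1 (y * U), (1 : ℝ) / k := by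
        apply Finset.sum_le_sum_of_subset_of_nonneg
        · intro k hk
          simp only [Finset.mem_image, Finset.mem_product, Finset.mem_Icc, roughS,
            Finset.mem_filter] at hk ⊢
          obtain ⟨⟨m, w⟩, ⟨h1, h2, -⟩, rfl⟩ := hk
          exact ⟨Nat.mul_pos (by omega) (by omega), Nat.mul_le_mul (by omega) (by omega)⟩
        · intros; positivity
    _ ≤ _ := by
        have := sum_inv_Icc_le (y * U)
        push_cast at this ⊢
        exact this

open ArithmeticFunction in
theorem rough_sum_log (y U : ℕ) :
    ∑ u ∈ roughS y U, Real.log u ≤ 6 * U * ∑ w ∈ roughS y U, (1 : ℝ) / w := by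
  have e1 : ∀ u ∈ roughS y U, Real.log u ≤
      ∑ w ∈ roughS y U, if w ∣ u then vonMangoldt (u / w) else 0 := by
    intro u hu
    rw [← vonMangoldt_sum, ← Nat.sum_div_divisors, ← Finset.sum_filter]
    simp only [roughS, Finset.mem_filter, Finset.mem_Icc] at hu
    apply Finset.sum_le_sum_of_subset_of_nonneg
    · intro d hd
      rw [Nat.mem_divisors] at hd
      simp only [roughS, Finset.mem_filter, Finset.mem_Icc]
      refine ⟨⟨⟨Nat.pos_of_dvd_of_pos hd.1 (by omega), (Nat.le_of_dvd (by omega) hd.1).trans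
        hu.1.2⟩, ?_⟩, hd.1⟩
      intro p hp
      exact hu.2 p (Nat.primeFactors_mono hd.1 (by omega) hp)
    · intros; exact vonMangoldt_nonneg
  refine (Finset.sum_le_sum e1).trans ?_
  rw [Finset.sum_comm, Finset.mul_sum]
  apply Finset.sum_le_sum
  intro w hw
  have hw1 : 1 ≤ w ∧ w ≤ U := by
    simp only [roughS, Finset.mem_filter, Finset.mem_Icc] at hw; exact hw.1
  have hpsi := Chebyshev.psi_le_const_mul_self (x := (U : ℝ) / w) (by positivity)
  have hlog4 : Real.log 4 ≤ 2 := by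
    have : (4 : ℝ) = 2 ^ 2 := by norm_num
    rw [this, Real.log_pow]
    have := Real.log_two_lt_d9
    push_cast; linarith
  have : (Real.log 4 + 4) * ((U : ℝ) / w) ≤ 6 * U * (1 / w) := by
    have : 0 ≤ (U : ℝ) / w := by positivity
    rw [mul_assoc, mul_one_div]
    nlinarith
  refine le_trans ?_ (hpsi.trans this)
  rw [Chebyshev.psi, Nat.floor_div_eq_div, ← Finset.sum_filter]
  have inj : Set.InjOn (fun u => u / w) (((roughS y U).filter (w ∣ ·) : Finset ℕ) : Set ℕ) := by
    intro a ha b hb hab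
    simp only [Finset.coe_filter, Set.mem_ofPred_eq] at ha hb hab
    exact Nat.div_left_inj ha.2 hb.2 |>.mp hab
  rw [← Finset.sum_image (f := fun d => vonMangoldt d) inj]
  apply Finset.sum_le_sum_of_subset_of_nonneg
  · intro d hd
    simp only [Finset.mem_image, Finset.mem_filter, roughS, Finset.mem_Icc, Finset.mem_Ioc] at hd ⊢
    obtain ⟨u, ⟨⟨h1, -⟩, h2⟩, rfl⟩ := hd
    exact ⟨Nat.div_pos (Nat.le_of_dvd (by omega) h2) (by omega), Nat.div_le_div_right h1.2⟩
  · intros; exact vonMangoldt_nonneg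

theorem rough_card (y U : ℕ) (hy : 2 ≤ y) (hU : 2 ≤ U) :
    ((roughS y U).card : ℝ) ≤ Real.sqrt U +
      12 * U * (1 + Real.log (y * U)) / (Real.log y * Real.log U) := by
  have hly : 0 < Real.log y := Real.log_pos (by exact_mod_cast hy)
  have hlU : 0 < Real.log U := Real.log_pos (by exact_mod_cast hU)
  have h1 := rough_sum_inv y U (by omega)
  have h2 := rough_sum_log y U
  set S1 := (roughS y U).filter fun u : ℕ => (u : ℝ) ≤ Real.sqrt U
  set S2 := (roughS y U).filter fun u : ℕ => ¬ (u : ℝ) ≤ Real.sqrt U with hS2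
  have hcard : (roughS y U).card = S1.card + S2.card :=
    (Finset.card_filter_add_card_filter_not _).symm
  have c1 : (S1.card : ℝ) ≤ Real.sqrt U := by
    have : S1 ⊆ Finset.Icc 1 ⌊Real.sqrt U⌋₊ := by
      intro u hu
      simp only [S1, roughS, Finset.mem_filter, Finset.mem_Icc] at hu ⊢
      exact ⟨hu.1.1.1, Nat.le_floor hu.2⟩
    have := Finset.card_le_card this
    rw [Nat.card_Icc, Nat.add_sub_cancel] at this
    exact (Nat.cast_le.mpr this).trans (Nat.floor_le (Real.sqrt_nonneg _))
  have c2 : (S2.card : ℝ) * (Real.log U / 2) ≤ ∑ u ∈ roughS y U, Real.log u := by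
    calc _ ≤ ∑ u ∈ S2, Real.log u := by
          rw [← nsmul_eq_mul]
          apply Finset.card_nsmul_le_sum
          intro u hu
          simp only [hS2, Finset.mem_filter, not_le] at hu
          rw [← Real.log_sqrt (by positivity)]
          exact Real.log_le_log (by positivity) hu.2.le
      _ ≤ _ := by
          apply Finset.sum_le_sum_of_subset_of_nonneg (Finset.filter_subset _ _)
          intro u _ _
          exact Real.log_natCast_nonneg u
  rw [hcard]; push_cast
  refine add_le_add c1 ?_
  rw [le_div_iff₀ (by positivity)]
  set R := ∑ w ∈ roughS y U, (1 : ℝ) / w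
  have : (S2.card : ℝ) * (Real.log U / 2) ≤ 6 * U * R := c2.trans h2
  have h3 : 6 * (U : ℝ) * (Real.log y * R) ≤ 6 * U * (1 + Real.log (y * U)) := by gcongr
  have h4 := mul_le_mul_of_nonneg_right this hly.le
  nlinarith

theorem sum_inv_sq_gt (D V : ℕ) (hD : 1 ≤ D) :
    ∑ d ∈ Finset.Ioc D V, (1 : ℝ) / (d : ℝ) ^ 2 ≤ 1 / D := by
  rcases le_or_gt V D with h | h
  · rw [Finset.Ioc_eq_empty (by omega)]; simp
  · have : ∀ k : ℕ, ∑ d ∈ Finset.Ioc D (D + k), (1 : ℝ) / (d : ℝ) ^ 2 ≤ 1 / D - 1 / ((D + k : ℕ) : ℝ) := by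
      intro k
      induction k with
      | zero => simp
      | succ k ih =>
        rw [← add_assoc, Finset.sum_Ioc_succ_top (by omega)]
        have hx : 0 < ((D + k : ℕ) : ℝ) := by exact_mod_cast (by omega)
        set x := ((D + k : ℕ) : ℝ) with hxd
        have hc : ((D + k + 1 : ℕ) : ℝ) = x + 1 := by rw [hxd]; push_cast; ring
        rw [hc]
        have : 1 / (x + 1) ^ 2 ≤ 1 / x - 1 / (x + 1) := by
          rw [div_sub_div _ _ (by positivity) (by positivity),
            div_le_div_iff₀ (by positivity) (by positivity)]
          nlinarith
        linarith
    have h2 := this (V - D)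
    rw [Nat.add_sub_cancel' h.le] at h2
    have : 0 ≤ 1 / (V : ℝ) := by positivity
    linarith

theorem smooth_card (y V D s : ℕ) (W : ℝ) (hW : 0 ≤ W) (hD : 1 ≤ D) (hy : D ^ 3 ≤ y)
    (hs : (y : ℝ) ^ s ≤ W) :
    ((smoothS y V).card : ℝ) ≤ W + V / D + V * (1 + Real.log V) / 2 ^ s := by
  set S1 := (Finset.Icc 1 V).filter fun v : ℕ => (v : ℝ) ≤ W
  set S2 := (Finset.Ioc D V).biUnion fun d => (Finset.Icc 1 V).filter fun v => d ^ 2 ∣ v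
  set S3 := (Finset.Icc 1 V).filter fun v => 2 ^ s ≤ v.divisors.card
  have hsub : smoothS y V ⊆ S1 ∪ (S2 ∪ S3) := by
    intro v hv
    simp only [smoothS, Finset.mem_filter, Finset.mem_Icc] at hv
    obtain ⟨⟨hv1, hvV⟩, hsm⟩ := hv
    by_contra hc
    simp only [Finset.mem_union, not_or, S1, S2, S3, Finset.mem_filter, Finset.mem_biUnion,
      Finset.mem_Icc, Finset.mem_Ioc, not_and, not_exists, not_le] at hc
    obtain ⟨c1, c2, c3⟩ := hc
    have c1 := c1 ⟨hv1, hvV⟩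
    have c3 := c3 ⟨hv1, hvV⟩
    have hle : v ≤ y ^ v.primeFactors.card := by
      conv_lhs => rw [← Nat.prod_factorization_pow_eq_self (by omega : v ≠ 0)]
      rw [Finsupp.prod, Nat.support_factorization, ← Finset.prod_const]
      apply Finset.prod_le_prod' 
      intro p hp
      have hpp := Nat.prime_of_mem_primeFactors hp
      have hk1 : 1 ≤ v.factorization p :=
        (hpp.factorization_pos_of_dvd (by omega) (Nat.dvd_of_mem_primeFactors hp))
      set k := v.factorization p with hk
      rcases Nat.lt_or_ge k 2 with hk2 | hk2
      · have : k = 1 := by omega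
        rw [this, pow_one]; exact (hsm p hp).le
      · have hdv : (p ^ (k / 2)) ^ 2 ∣ v := by
          rw [← pow_mul]
          exact (pow_dvd_pow p (by omega)).trans (Nat.ordProj_dvd v p)
        have hDle : p ^ (k / 2) ≤ D := by
          by_contra hlt
          push Not at hlt
          have hlev : p ^ (k / 2) ≤ V :=
            (Nat.le_of_dvd (by omega) ((dvd_pow_self _ (by norm_num)).trans hdv)).trans hvV
          exact c2 _ ⟨hlt, hlev⟩ ⟨hv1, hvV⟩ hdv
        calc p ^ k ≤ p ^ (k / 2 * 3) := Nat.pow_le_pow_right hpp.pos (by omega)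
          _ = (p ^ (k / 2)) ^ 3 := pow_mul _ _ _
          _ ≤ D ^ 3 := Nat.pow_le_pow_left hDle 3
          _ ≤ y := hy
    have hlt : v.primeFactors.card < s := by
      have : 2 ^ v.primeFactors.card ≤ v.divisors.card := by
        rw [Nat.card_divisors (by omega), ← Finset.prod_const]
        apply Finset.prod_le_prod'
        intro p hp
        have := (Nat.prime_of_mem_primeFactors hp).factorization_pos_of_dvd (by omega)
          (Nat.dvd_of_mem_primeFactors hp)
        omega
      exact (Nat.pow_lt_pow_iff_right (by norm_num)).mp (this.trans_lt c3)
    have hy1 : 1 ≤ y := le_trans (Nat.one_le_pow _ _ hD) hy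
    have : (v : ℝ) ≤ (y : ℝ) ^ s := by
      exact_mod_cast hle.trans (Nat.pow_le_pow_right hy1 hlt.le)
    linarith
  have k1 : (S1.card : ℝ) ≤ W := by
    have : S1 ⊆ Finset.Icc 1 ⌊W⌋₊ := by
      intro u hu
      simp only [S1, Finset.mem_filter, Finset.mem_Icc] at hu ⊢
      exact ⟨hu.1.1, Nat.le_floor hu.2⟩
    have := Finset.card_le_card this
    rw [Nat.card_Icc, Nat.add_sub_cancel] at this
    exact (Nat.cast_le.mpr this).trans (Nat.floor_le hW)
  have cm : ∀ d : ℕ, (((Finset.Icc 1 V).filter fun v => d ∣ v).card : ℝ) ≤ V / d := by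
    intro d
    have : ((Finset.Icc 1 V).filter fun v => d ∣ v).card = V / d :=
      Nat.Ioc_filter_dvd_card_eq_div V d
    rw [this]; exact Nat.cast_div_le
  have k2 : (S2.card : ℝ) ≤ V / D := by
    have h1 : (S2.card : ℝ) ≤ ∑ d ∈ Finset.Ioc D V,
        (((Finset.Icc 1 V).filter fun v => d ^ 2 ∣ v).card : ℝ) := by
      exact_mod_cast Finset.card_biUnion_le
    refine h1.trans ?_
    calc _ ≤ ∑ d ∈ Finset.Ioc D V, (V : ℝ) * (1 / (d : ℝ) ^ 2) := by
          apply Finset.sum_le_sum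
          intro d _
          have := cm (d ^ 2)
          push_cast at this
          rwa [mul_one_div]
      _ ≤ (V : ℝ) * (1 / (D : ℝ)) := by
          rw [← Finset.mul_sum]
          exact mul_le_mul_of_nonneg_left (sum_inv_sq_gt D V hD) (by positivity)
      _ = _ := by rw [mul_one_div]
  have k3 : (S3.card : ℝ) ≤ V * (1 + Real.log V) / 2 ^ s := by
    rw [le_div_iff₀ (by positivity)]
    calc (S3.card : ℝ) * 2 ^ s ≤ ∑ v ∈ S3, (v.divisors.card : ℝ) := by
          rw [← nsmul_eq_mul]
          apply Finset.card_nsmul_le_sum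
          intro v hv
          exact_mod_cast (Finset.mem_filter.mp hv).2
      _ ≤ ∑ v ∈ Finset.Icc 1 V, (v.divisors.card : ℝ) :=
          Finset.sum_le_sum_of_subset_of_nonneg (Finset.filter_subset _ _)
            (fun _ _ _ => by positivity)
      _ = ∑ v ∈ Finset.Icc 1 V, ∑ d ∈ v.divisors, (1 : ℝ) := by simp
      _ = ∑ d ∈ Finset.Icc 1 V, 1 * (((Finset.Icc 1 V).filter (d ∣ ·)).card : ℝ) :=
          sum_dvd_swap V _ (Finset.Subset.refl _) (fun _ => 1)
      _ ≤ ∑ d ∈ Finset.Icc 1 V, (V : ℝ) * (1 / d) := by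
          apply Finset.sum_le_sum
          intro d _
          rw [one_mul, mul_one_div]; exact cm d
      _ ≤ _ := by
          rw [← Finset.mul_sum]
          exact mul_le_mul_of_nonneg_left (sum_inv_Icc_le V) (by positivity)
  have t1 := Finset.card_le_card hsub
  have t2 := Finset.card_union_le S1 (S2 ∪ S3)
  have t3 := Finset.card_union_le S2 S3
  have : ((smoothS y V).card : ℝ) ≤ S1.card + (S2.card + S3.card) := by
    exact_mod_cast (by omega)
  linarith

/-- Splitting lemma. -/
theorem exists_split (T : ℝ) (hT : 1 ≤ T) (a : ℕ) (ha : T ≤ a)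
    (hp : ∀ p ∈ a.primeFactors, (p : ℝ) ≤ T ^ 2) :
    ∃ u v : ℕ, u * v = a ∧ T ≤ u ∧ (u : ℝ) ≤ T ^ 2 ∧
      ∀ p ∈ u.primeFactors, ∀ q ∈ v.primeFactors, q ≤ p := by
  classical
  have hex : ∃ u : ℕ, T ≤ u ∧ ∃ v : ℕ, u * v = a ∧
      ∀ p ∈ u.primeFactors, ∀ q ∈ v.primeFactors, q ≤ p :=
    ⟨a, ha, 1, mul_one a, by simp⟩
  have ha0 : 0 < a := by
    have : (0 : ℝ) < a := by linarith
    exact_mod_cast this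
  set u := Nat.find hex with hu
  obtain ⟨hTu, v, huv, hpq⟩ := Nat.find_spec hex
  rw [← hu] at hTu huv hpq
  refine ⟨u, v, huv, hTu, ?_, hpq⟩
  by_contra hlt
  push Not at hlt
  have hu0 : u ≠ 0 := by rintro h; rw [h] at huv; omega
  have hv0 : v ≠ 0 := by rintro h; rw [h] at huv; omega
  have hu1 : u ≠ 1 := by
    intro h; rw [h] at hlt; push_cast at hlt; nlinarith
  have hpr := Nat.minFac_prime hu1
  set p := u.minFac with hpdef
  obtain ⟨w, hw⟩ : p ∣ u := Nat.minFac_dvd u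
  have hw0 : w ≠ 0 := by rintro rfl; omega
  have hpu : p ∈ u.primeFactors := Nat.mem_primeFactors.mpr ⟨hpr, Nat.minFac_dvd u, hu0⟩
  have hwu : w < u := by
    rw [hw]; have := hpr.two_le; nlinarith [Nat.pos_of_ne_zero hw0]
  have hwT : (w : ℝ) < T := by
    have := Nat.find_min hex hwu
    by_contra hc
    push Not at hc
    apply this
    refine ⟨hc, p * v, by rw [← huv, hw]; ring, ?_⟩
    intro q hq r hr
    have hq' := Nat.mem_primeFactors.mp hq
    have hwdu : w ∣ u := hw ▸ Dvd.intro_left _ rfl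
    have hpq1 : p ≤ q := Nat.minFac_le_of_dvd hq'.1.two_le (hq'.2.1.trans hwdu)
    have hr' := Nat.mem_primeFactors.mp hr
    rcases (hr'.1.dvd_mul).mp hr'.2.1 with h | h
    · rw [(Nat.prime_dvd_prime_iff_eq hr'.1 hpr).mp h]; exact hpq1
    · exact hpq q (Nat.primeFactors_mono hwdu hu0 hq) r
        (Nat.mem_primeFactors.mpr ⟨hr'.1, h, hv0⟩)
  rcases Nat.lt_or_ge w 2 with h2 | h2
  · have hw1 : w = 1 := by omega
    have : u = p := by rw [hw1] at hw; omega
    have := hp p (Nat.primeFactors_mono (huv ▸ Dvd.intro _ rfl) (by omega) hpu)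
    have hup : (u : ℝ) = p := by exact_mod_cast ‹u = p›
    linarith
  · have hwdu : w ∣ u := hw ▸ Dvd.intro_left _ rfl
    have hpw : p ≤ w := Nat.minFac_le_of_dvd h2 hwdu
    have hpw' : (p : ℝ) ≤ w := by exact_mod_cast hpw
    have : (u : ℝ) = p * w := by exact_mod_cast hw
    have : (0:ℝ) ≤ w := by positivity
    nlinarith

theorem ev_pow_le_exp (k : ℕ) (b : ℝ) (hb : 0 < b) :
    ∀ᶠ x : ℝ in Filter.atTop, x ^ k ≤ Real.exp (b * x) := by
  have h := (isLittleO_pow_exp_pos_mul_atTop (k := k) hb).bound (c := 1) one_pos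
  filter_upwards [h] with x hx
  rw [one_mul, Real.norm_eq_abs, Real.norm_eq_abs, abs_of_pos (Real.exp_pos _)] at hx
  exact (le_abs_self _).trans hx

theorem density_bounds : ∀ᶠ L : ℝ in Filter.atTop, ∃ y : ℕ,
    (∀ U : ℕ, Real.exp (L / 3) ≤ U → (U : ℝ) ≤ 2 * Real.exp L →
      ((roughS y U).card : ℝ) ≤ 109 / Real.sqrt L * U) ∧
    (∀ V : ℕ, Real.exp (L / 3) - 1 ≤ V → (V : ℝ) ≤ Real.exp L →
      ((smoothS y V).card : ℝ) ≤ 109 / Real.sqrt L * V) := by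
  have e1 := ev_pow_le_exp 1 (1 / 12) (by norm_num)
  have e2 := Real.tendsto_sqrt_atTop.eventually (ev_pow_le_exp 7 1 one_pos)
  have e3 := Real.tendsto_sqrt_atTop.eventually (ev_pow_le_exp 5 (1 / 16) (by norm_num))
  filter_upwards [e1, e2, e3, Filter.eventually_ge_atTop 100] with L e1 e2 e3 hL
  set t := Real.sqrt L with ht
  have htL : t ^ 2 = L := Real.sq_sqrt (by linarith)
  have ht10 : 10 ≤ t := by
    rw [ht]; apply Real.le_sqrt_of_sq_le; norm_num; linarith
  rw [pow_one] at e1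
  rw [one_mul] at e2
  set y := ⌈Real.exp t⌉₊ with hy
  have hy1 : Real.exp t ≤ y := Nat.le_ceil _
  have hy2 : (y : ℝ) ≤ Real.exp (t + 1) := by
    have h1 : (y : ℝ) < Real.exp t + 1 := Nat.ceil_lt_add_one (Real.exp_pos _).le
    rw [Real.exp_add]
    have h2 := Real.add_one_le_exp (1 : ℝ)
    have h3 := Real.add_one_le_exp t
    nlinarith
  have hy0 : (0 : ℝ) < y := (Real.exp_pos t).trans_le hy1
  have hly1 : t ≤ Real.log y := (Real.le_log_iff_exp_le hy0).mpr hy1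
  have hly2 : Real.log y ≤ t + 1 := (Real.log_le_iff_le_exp hy0).mpr hy2
  have hy2' : 2 ≤ y := by
    have : (2 : ℝ) ≤ y := by linarith [Real.add_one_le_exp t]
    exact_mod_cast this
  have hT : L ≤ Real.exp (L / 3) := e1.trans (Real.exp_le_exp.mpr (by linarith))
  refine ⟨y, ?_, ?_⟩
  · intro U hU1 hU2
    have hU0 : (0 : ℝ) < U := (Real.exp_pos _).trans_le hU1
    have hU2' : 2 ≤ U := by
      have : (2 : ℝ) ≤ U := by linarith
      exact_mod_cast this
    have hlU : L / 3 ≤ Real.log U := (Real.le_log_iff_exp_le hU0).mpr hU1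
    have hlU2 : Real.log U ≤ L + 1 := by
      rw [Real.log_le_iff_le_exp hU0, Real.exp_add]
      have h2 := Real.add_one_le_exp (1 : ℝ)
      nlinarith [Real.exp_pos L]
    refine (rough_card y U hy2' hU2').trans ?_
    have a1 : Real.sqrt U ≤ 1 / t * U := by
      have : t ≤ Real.sqrt U := Real.sqrt_le_sqrt (hT.trans hU1)
      rw [div_mul_eq_mul_div, le_div_iff₀ (by linarith), one_mul]
      calc _ ≤ Real.sqrt U * Real.sqrt U := by gcongr
        _ = U := Real.mul_self_sqrt hU0.le
    have a2 : 12 * U * (1 + Real.log (y * U)) / (Real.log y * Real.log U) ≤ 108 / t * U := by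
      rw [Real.log_mul hy0.ne' hU0.ne']
      have n1 : 1 + (Real.log y + Real.log U) ≤ 3 * L := by nlinarith
      have n2 : t * (L / 3) ≤ Real.log y * Real.log U := by gcongr
      calc _ ≤ 12 * U * (3 * L) / (t * (L / 3)) := by gcongr
        _ = 108 / t * U := by
          have : t ≠ 0 := by linarith
          have : L ≠ 0 := by linarith
          field_simp; norm_num
    calc _ ≤ 1 / t * (U : ℝ) + 108 / t * U := add_le_add a1 a2
      _ = _ := by ring
  · intro V hV1 hV2
    have hV0 : (0 : ℝ) < V := by linarith
    have hlV : Real.log V ≤ L := (Real.log_le_iff_le_exp hV0).mpr hV2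
    have hDL : L ≤ (⌈L⌉₊ : ℝ) := Nat.le_ceil _
    have hD1 : 1 ≤ ⌈L⌉₊ := Nat.one_le_ceil_iff.mpr (by linarith)
    have hD3 : ⌈L⌉₊ ^ 3 ≤ y := by
      have h1 : (⌈L⌉₊ : ℝ) ≤ 2 * L := by
        have := Nat.ceil_lt_add_one (by linarith : (0 : ℝ) ≤ L)
        linarith
      have h2 : (⌈L⌉₊ : ℝ) ^ 3 ≤ y := by
        calc _ ≤ (2 * L) ^ 3 := by gcongr
          _ = 8 * t ^ 6 := by rw [← htL]; ring
          _ ≤ t * t ^ 6 := by gcongr; linarith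
          _ = t ^ 7 := by ring
          _ ≤ _ := e2.trans hy1
      exact_mod_cast h2
    set s := ⌊t / 8⌋₊ with hs
    have hs1 : (s : ℝ) ≤ t / 8 := Nat.floor_le (by linarith)
    have hs2 : t / 8 < s + 1 := Nat.lt_floor_add_one _
    have hys : (y : ℝ) ^ s ≤ Real.exp (L / 4) := by
      calc _ ≤ Real.exp (t + 1) ^ s := by gcongr
        _ = Real.exp (s * (t + 1)) := by rw [← Real.exp_nat_mul]
        _ ≤ _ := by
          apply Real.exp_le_exp.mpr
          rw [← htL]
          nlinarith
    have h2s : L ^ 2 ≤ 2 ^ s := by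
      have h1 : Real.exp (1 / 16 * t) ≤ 2 * 2 ^ s := by
        rw [← pow_succ', ← Real.rpow_natCast, Real.rpow_def_of_pos (by norm_num)]
        apply Real.exp_le_exp.mpr
        have := Real.log_two_gt_d9
        push_cast
        nlinarith
      have h2 : L ^ 2 = t ^ 4 := by rw [← htL]; ring
      have h3 : 2 * t ^ 4 ≤ t ^ 5 := by
        rw [pow_succ t 4, mul_comm 2]; gcongr; linarith
      linarith
    refine (smooth_card y V ⌈L⌉₊ s (Real.exp (L / 4)) (Real.exp_pos _).le hD1 hD3 hys).trans ?_
    have b1 : Real.exp (L / 4) ≤ 1 / t * V := by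
      rw [div_mul_eq_mul_div, le_div_iff₀ (by linarith), one_mul]
      have h1 : Real.exp (L / 3) = Real.exp (L / 4) * Real.exp (1 / 12 * L) := by
        rw [← Real.exp_add]; congr 1; ring
      have h2 : 2 * t ≤ Real.exp (1 / 12 * L) := by nlinarith
      have h3 : Real.exp (L / 4) * (2 * t) ≤ Real.exp (L / 3) := by rw [h1]; gcongr
      have := Real.one_le_exp (by linarith : 0 ≤ L / 4)
      nlinarith
    have htle : t ≤ L := by nlinarith
    have b2 : (V : ℝ) / ⌈L⌉₊ ≤ 1 / t * V := by
      calc _ ≤ (V : ℝ) / t := by gcongr; linarith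
        _ = _ := by ring
    have b3 : V * (1 + Real.log V) / 2 ^ s ≤ 2 / t * V := by
      calc _ ≤ V * (2 * L) / L ^ 2 := by gcongr; linarith
        _ = 2 / L * V := by
          have : L ≠ 0 := by linarith
          field_simp
        _ ≤ 2 / t * V := by gcongr
    calc _ ≤ 1 / t * (V : ℝ) + 1 / t * V + 2 / t * V := add_le_add (add_le_add b1 b2) b3
      _ = 4 / t * V := by ring
      _ ≤ _ := by gcongr; norm_num

theorem final_asymp : ∀ᶠ L : ℝ in Filter.atTop,
    2 + 257 + 14 * (2 * L + 1) * (2 * (109 / Real.sqrt L)) ^ ((2 : ℝ) / 3) ≤ L ^ (0.9 : ℝ) := by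
  set K : ℝ := (218 : ℝ) ^ ((2 : ℝ) / 3) with hK
  have hK0 : 0 ≤ K := by positivity
  have h1 := (tendsto_rpow_atTop (by norm_num : (0 : ℝ) < 0.2)).eventually_ge_atTop
    (259 + 42 * K)
  filter_upwards [h1, Filter.eventually_ge_atTop 1] with L h1 hL
  have e : (2 * (109 / Real.sqrt L)) ^ ((2 : ℝ) / 3) = K * L ^ (-(1 : ℝ) / 3) := by
    have : 2 * (109 / Real.sqrt L) = 218 * L ^ (-(1 : ℝ) / 2) := by
      rw [Real.sqrt_eq_rpow, neg_div, Real.rpow_neg (by linarith)]; ring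
    rw [this, Real.mul_rpow (by norm_num) (by positivity), ← Real.rpow_mul (by linarith)]
    norm_num [hK]
  rw [e]
  have e2 : L * L ^ (-(1 : ℝ) / 3) = L ^ ((2 : ℝ) / 3) := by
    nth_rewrite 1 [← Real.rpow_one L]
    rw [← Real.rpow_add (by linarith)]; norm_num
  have p0 : 1 ≤ L ^ ((2 : ℝ) / 3) := Real.one_le_rpow hL (by norm_num)
  have p1 : (259 + 42 * K) * L ^ ((2 : ℝ) / 3) ≤ L ^ (0.2 : ℝ) * L ^ ((2 : ℝ) / 3) := by gcongr
  have p2 : L ^ (0.2 : ℝ) * L ^ ((2 : ℝ) / 3) ≤ L ^ (0.9 : ℝ) := by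
    rw [← Real.rpow_add (by linarith)]
    exact Real.rpow_le_rpow_of_exponent_le hL (by norm_num)
  have p3 : 14 * (2 * L + 1) * (K * L ^ (-(1 : ℝ) / 3)) ≤ 42 * K * L ^ ((2 : ℝ) / 3) := by
    rw [← e2]
    have : 0 ≤ K * L ^ (-(1 : ℝ) / 3) := by positivity
    nlinarith
  nlinarith

theorem large_part {A A1 : Finset ℕ} (hA : MulSidon3 A) (hs : A1 ⊆ A) (n : ℕ)
    (hn : A ⊆ Finset.Icc 1 n) (T : ℝ) (hT : 0 < T) (hTn : T ^ 3 = n)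
    (h1 : ∀ a ∈ A1, ∃ p ∈ a.primeFactors, T ^ 2 < (p : ℝ)) :
    (A1.card : ℝ) ≤ (Nat.primeCounting n : ℝ) + (Nat.primeCounting (n / 2) : ℝ) + 2 * T ^ 2 := by
  classical
  have h1' : ∀ a : ℕ, ∃ p : ℕ, a ∈ A1 → p ∈ a.primeFactors ∧ T ^ 2 < (p : ℝ) := by
    intro a
    by_cases ha : a ∈ A1
    · obtain ⟨p, hp⟩ := h1 a ha
      exact ⟨p, fun _ => hp⟩
    · exact ⟨0, fun h => absurd h ha⟩
  choose f hf using h1'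
  set g : ℕ → ℕ := fun a => a / f a with hg
  have hfg : ∀ a ∈ A1, f a * g a = a := fun a ha =>
    Nat.mul_div_cancel' (Nat.dvd_of_mem_primeFactors (hf a ha).1)
  set E := A1.image fun a => (f a, g a) with hE
  have hC6 : C6Free E := c6free_image hA hs f g hfg
  have hcard : E.card = A1.card := by
    apply Finset.card_image_of_injOn
    intro a ha b hb hab
    simp only [Prod.mk.injEq] at hab
    rw [← hfg a ha, ← hfg b hb, hab.1, hab.2]
  have hmem : ∀ x y, (x, y) ∈ E → x.Prime ∧ x * y ≤ n ∧ 1 ≤ y ∧ (y : ℝ) ≤ T := by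
    intro x y h
    simp only [hE, Finset.mem_image, Prod.mk.injEq] at h
    obtain ⟨a, ha, rfl, rfl⟩ := h
    have han := Finset.mem_Icc.mp (hn (hs ha))
    refine ⟨Nat.prime_of_mem_primeFactors (hf a ha).1, by rw [hfg a ha]; exact han.2, ?_, ?_⟩
    · rcases Nat.eq_zero_or_pos (g a) with h0 | h0
      · have := hfg a ha
        rw [h0, mul_zero] at this; omega
      · exact h0
    · by_contra hc
      push Not at hc
      have h3 := (hf a ha).2
      have : ((f a * g a : ℕ) : ℝ) ≤ n := by rw [hfg a ha]; exact_mod_cast han.2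
      push_cast at this
      have : T ^ 2 * T < f a * g a := by gcongr
      nlinarith
  set X := Nat.primesLE n with hX
  set Y := Finset.Icc 1 ⌊T⌋₊ with hY
  have hsub : E ⊆ X ×ˢ Y := by
    rintro ⟨x, y⟩ h
    obtain ⟨a1, a2, a3, a4⟩ := hmem x y h
    rw [Finset.mem_product, hX, Nat.mem_primesLE, hY, Finset.mem_Icc]
    exact ⟨⟨(Nat.le_mul_of_pos_right x a3).trans a2, a1⟩, a3, Nat.le_floor a4⟩
  have hgy := hC6.gyori hsub
  have hsum : E.card = ∑ x ∈ X, (nR E x).card := by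
    rw [Finset.card_eq_sum_card_fiberwise (f := Prod.fst) (t := X)
      (fun q hq => (Finset.mem_product.mp (hsub hq)).1)]
    apply Finset.sum_congr rfl
    intro x _
    rw [nR, Finset.card_image_of_injOn]
    intro a ha b hb hab
    simp only [Finset.coe_filter, Set.mem_ofPred_eq] at ha hb
    exact Prod.ext (ha.2.trans hb.2.symm) hab
  have hdeg : ∀ x ∈ X, (nR E x).card ≤
      ((nR E x).card - 2) + (1 + if x ∈ Nat.primesLE (n / 2) then 1 else 0) := by
    intro x hx
    split_ifs with hx2
    · omega
    · have : nR E x ⊆ {1} := by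
        intro y hy
        obtain ⟨a1, a2, a3, a4⟩ := hmem x y (mem_nR.mp hy)
        rw [Nat.mem_primesLE] at hx2
        have hx3 : ¬ x ≤ n / 2 := fun h => hx2 ⟨h, a1⟩
        rw [Finset.mem_singleton]
        by_contra hne
        have : x * 2 ≤ x * y := Nat.mul_le_mul_left x (by omega)
        omega
      have := Finset.card_le_card this
      simp at this
      omega
  have hfin : A1.card ≤ 2 * Y.card ^ 2 + (X.card + (Nat.primesLE (n / 2)).card) := by
    rw [← hcard, hsum]
    refine (Finset.sum_le_sum hdeg).trans ?_
    rw [Finset.sum_add_distrib, Finset.sum_add_distrib]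
    refine Nat.add_le_add hgy (Nat.add_le_add (by simp) ?_)
    rw [← Finset.card_filter]
    exact Finset.card_le_card fun x hx => (Finset.mem_filter.mp hx).2
  rw [hX, Nat.primesLE_card_eq_primeCounting, Nat.primesLE_card_eq_primeCounting] at hfin
  have hYc : (Y.card : ℝ) ≤ T := by
    rw [hY, Nat.card_Icc, Nat.add_sub_cancel]; exact Nat.floor_le hT.le
  have : (A1.card : ℝ) ≤ 2 * (Y.card : ℝ) ^ 2 + (Nat.primeCounting n + Nat.primeCounting (n / 2)) := by
    exact_mod_cast hfin
  have : (Y.card : ℝ) ^ 2 ≤ T ^ 2 := by gcongr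
  linarith

theorem sidon_piece {A A' : Finset ℕ} (hA : MulSidon3 A) (hs : A' ⊆ A) (f g : ℕ → ℕ)
    (hfg : ∀ a ∈ A', f a * g a = a) (X Y : Finset ℕ)
    (hX : ∀ a ∈ A', f a ∈ X) (hY : ∀ a ∈ A', g a ∈ Y) (M N K : ℝ)
    (hM : (X.card : ℝ) ≤ M) (hN : (Y.card : ℝ) ≤ N) (hK : (X.card : ℝ) * Y.card ≤ K) :
    (A'.card : ℝ) ≤ 16 * (M + N) + 7 * K ^ ((2 : ℝ) / 3) := by
  classical
  have hC6 := c6free_image hA hs f g hfg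
  have hcard : (A'.image fun a => (f a, g a)).card = A'.card := by
    apply Finset.card_image_of_injOn
    intro a ha b hb hab
    simp only [Prod.mk.injEq] at hab
    rw [← hfg a ha, ← hfg b hb, hab.1, hab.2]
  have := hC6.card_le (X := X) (Y := Y) (by
    intro q hq
    obtain ⟨a, ha, rfl⟩ := Finset.mem_image.mp hq
    exact Finset.mem_product.mpr ⟨hX a ha, hY a ha⟩)
  rw [hcard] at this
  refine this.trans ?_
  gcongr

theorem sum_two_pow_le (J : Finset ℕ) (M : ℝ) (hM : 0 ≤ M) (h : ∀ j ∈ J, (2 : ℝ) ^ j ≤ M) :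
    ∑ j ∈ J, (2 : ℝ) ^ j ≤ 2 * M := by
  rcases J.eq_empty_or_nonempty with rfl | hne
  · simp; linarith
  · have hk := h _ (J.max'_mem hne)
    set k := J.max' hne
    calc _ ≤ ∑ j ∈ Finset.range (k + 1), (2 : ℝ) ^ j := by
          apply Finset.sum_le_sum_of_subset_of_nonneg
          · intro j hj
            rw [Finset.mem_range]
            have := J.le_max' j hj
            omega
          · intros; positivity
      _ ≤ 2 ^ (k + 1) := by
          rw [geom_sum_eq (by norm_num)]; norm_num
      _ ≤ _ := by rw [pow_succ]; linarith

theorem sum_half_pow_le (J : Finset ℕ) (M : ℝ) (hM : 0 ≤ M) (h : ∀ j ∈ J, (1 / 2 : ℝ) ^ j ≤ M) :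
    ∑ j ∈ J, (1 / 2 : ℝ) ^ j ≤ 2 * M := by
  rcases J.eq_empty_or_nonempty with rfl | hne
  · simp; linarith
  · have hk := h _ (J.min'_mem hne)
    set k := J.min' hne
    calc _ ≤ ∑ j ∈ Finset.Ico k (J.max' hne + 1), (1 / 2 : ℝ) ^ j := by
          apply Finset.sum_le_sum_of_subset_of_nonneg
          · intro j hj
            rw [Finset.mem_Ico]
            have := J.le_max' j hj
            have := J.min'_le j hj
            omega
          · intros; positivity
      _ ≤ (1 / 2) ^ k / (1 - 1 / 2) := geom_sum_Ico_le_of_lt_one (by norm_num) (by norm_num)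
      _ ≤ _ := by norm_num at hk ⊢; linarith

theorem small_part {A A2 : Finset ℕ} (hA : MulSidon3 A) (hs : A2 ⊆ A) (n : ℕ)
    (hn : A ⊆ Finset.Icc 1 n) (T : ℝ) (hT : 1 ≤ T) (hTn : T ^ 3 = n) (y : ℕ) (κ : ℝ)
    (hκ : 0 ≤ κ)
    (HR : ∀ U : ℕ, T ≤ U → (U : ℝ) ≤ 2 * n → ((roughS y U).card : ℝ) ≤ κ * U)
    (HS : ∀ V : ℕ, T - 1 ≤ V → (V : ℝ) ≤ n → ((smoothS y V).card : ℝ) ≤ κ * V)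
    (h2 : ∀ a ∈ A2, ∀ p ∈ a.primeFactors, (p : ℝ) ≤ T ^ 2) :
    (A2.card : ℝ) ≤ T ^ 2 * (257 + 14 * (Nat.log 2 n + 1) * (2 * κ) ^ ((2 : ℝ) / 3)) := by
  classical
  set B := A2.filter fun a : ℕ => T ≤ (a : ℝ) with hB
  have hBA2 : B ⊆ A2 := Finset.filter_subset _ _
  have hlow : ((A2.filter fun a : ℕ => ¬ T ≤ (a : ℝ)).card : ℝ) ≤ T := by
    have : (A2.filter fun a : ℕ => ¬ T ≤ (a : ℝ)) ⊆ Finset.Icc 1 ⌊T⌋₊ := by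
      intro a ha
      simp only [Finset.mem_filter, not_le] at ha
      exact Finset.mem_Icc.mpr ⟨(Finset.mem_Icc.mp (hn (hs ha.1))).1, Nat.le_floor ha.2.le⟩
    have := Finset.card_le_card this
    rw [Nat.card_Icc, Nat.add_sub_cancel] at this
    exact (Nat.cast_le.mpr this).trans (Nat.floor_le (by linarith))
  have hsplit : A2.card = B.card + (A2.filter fun a : ℕ => ¬ T ≤ (a : ℝ)).card :=
    (Finset.card_filter_add_card_filter_not _).symm
  have hex : ∀ a : ℕ, ∃ u v : ℕ, a ∈ B → u * v = a ∧ T ≤ u ∧ (u : ℝ) ≤ T ^ 2 ∧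
      ∀ p ∈ u.primeFactors, ∀ q ∈ v.primeFactors, q ≤ p := by
    intro a
    by_cases ha : a ∈ B
    · have ha' := Finset.mem_filter.mp ha
      obtain ⟨u, v, h⟩ := exists_split T hT a ha'.2 (h2 a ha'.1)
      exact ⟨u, v, fun _ => h⟩
    · exact ⟨0, 0, fun h => absurd h ha⟩
  choose f g hfg using hex
  have hT0 : 0 < T := by linarith
  set J := (Finset.range (Nat.log 2 n + 1)).filter fun j : ℕ =>
    T < (2 : ℝ) ^ (j + 1) ∧ (2 : ℝ) ^ j ≤ T ^ 2 with hJ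
  -- basic facts
  have facts : ∀ a ∈ B, 1 ≤ f a ∧ 1 ≤ g a ∧ f a ≤ n ∧ 2 ^ Nat.log 2 (f a) ≤ f a ∧
      f a < 2 ^ (Nat.log 2 (f a) + 1) ∧ g a ≤ n / 2 ^ Nat.log 2 (f a) := by
    intro a ha
    obtain ⟨e1, e2, e3, -⟩ := hfg a ha
    have han := Finset.mem_Icc.mp (hn (hs (hBA2 ha)))
    have hf1 : 1 ≤ f a := by
      have : (0 : ℝ) < f a := by linarith
      exact_mod_cast this
    have hg1 : 1 ≤ g a := by
      rcases Nat.eq_zero_or_pos (g a) with h0 | h0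
      · rw [h0, mul_zero] at e1; omega
      · exact h0
    have hp1 : 2 ^ Nat.log 2 (f a) ≤ f a := Nat.pow_log_le_self 2 (by omega)
    refine ⟨hf1, hg1, ?_, hp1, Nat.lt_pow_succ_log_self (by norm_num) _, ?_⟩
    · nlinarith
    · rw [Nat.le_div_iff_mul_le (by positivity)]
      calc g a * 2 ^ Nat.log 2 (f a) ≤ g a * f a := Nat.mul_le_mul_left _ hp1
        _ = a := by rw [mul_comm]; exact e1
        _ ≤ n := han.2
  have hJmem : ∀ a ∈ B, Nat.log 2 (f a) ∈ J := by
    intro a ha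
    obtain ⟨e1, e2, e3, -⟩ := hfg a ha
    obtain ⟨f1, f2, f3, f4, f5, f6⟩ := facts a ha
    rw [hJ, Finset.mem_filter, Finset.mem_range]
    refine ⟨Nat.lt_succ_of_le (Nat.log_mono_right f3), ?_, ?_⟩
    · refine e2.trans_lt ?_
      exact_mod_cast f5
    · refine le_trans ?_ e3
      exact_mod_cast f4
  have hpiece : ∀ j ∈ J, ((B.filter fun a => Nat.log 2 (f a) = j).card : ℝ) ≤
      2 * (16 * (2 * (2 : ℝ) ^ j + n * (1 / 2) ^ j) + 7 * (2 * κ * n) ^ ((2 : ℝ) / 3)) := by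
    intro j hj
    rw [hJ, Finset.mem_filter, Finset.mem_range] at hj
    obtain ⟨hj1, hj2, hj3⟩ := hj
    set Bj := B.filter fun a => Nat.log 2 (f a) = j with hBj
    have hBjB : Bj ⊆ B := Finset.filter_subset _ _
    set B1 := Bj.filter fun a => ∀ q ∈ (g a).primeFactors, q < y with hB1
    set B2 := Bj.filter fun a => ¬ ∀ q ∈ (g a).primeFactors, q < y with hB2
    have hc : Bj.card = B1.card + B2.card := (Finset.card_filter_add_card_filter_not _).symm
    have hVle : ((n / 2 ^ j : ℕ) : ℝ) ≤ n * (1 / 2) ^ j := by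
      refine Nat.cast_div_le.trans (le_of_eq ?_)
      push_cast
      rw [one_div, inv_pow, div_eq_mul_inv]
    have hUeq : ((2 ^ (j + 1) : ℕ) : ℝ) = 2 * 2 ^ j := by push_cast; ring
    have hprod : (2 * (2 : ℝ) ^ j) * (n * (1 / 2) ^ j) = 2 * n := by
      have : (2 : ℝ) ^ j * (1 / 2) ^ j = 1 := by rw [← mul_pow]; norm_num
      linear_combination 2 * (n : ℝ) * this
    have cU : ((Finset.Icc 1 (2 ^ (j + 1))).card : ℝ) ≤ 2 * 2 ^ j := by
      rw [Nat.card_Icc, Nat.add_sub_cancel, hUeq]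
    have cV : ((Finset.Icc 1 (n / 2 ^ j)).card : ℝ) ≤ n * (1 / 2) ^ j := by
      rw [Nat.card_Icc, Nat.add_sub_cancel]; exact hVle
    have cR : ((roughS y (2 ^ (j + 1))).card : ℝ) ≤ κ * (2 * 2 ^ j) := by
      rw [← hUeq]
      apply HR
      · push_cast; exact hj2.le
      · rw [hUeq]
        have : (2 : ℝ) ^ j ≤ n := by rw [← hTn]; nlinarith [sq_nonneg T]
        linarith
    have cS : ((smoothS y (n / 2 ^ j)).card : ℝ) ≤ κ * (n * (1 / 2) ^ j) := by
      refine (HS _ ?_ ?_).trans (by gcongr)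
      · have h1 : (n : ℝ) / 2 ^ j < ((n / 2 ^ j : ℕ) : ℝ) + 1 := by
          have := Nat.lt_floor_add_one ((n : ℝ) / ((2 ^ j : ℕ) : ℝ))
          rw [Nat.floor_div_eq_div] at this
          push_cast at this ⊢
          exact this
        have h2 : T ≤ (n : ℝ) / 2 ^ j := by
          rw [le_div_iff₀ (by positivity), ← hTn]
          nlinarith
        linarith
      · exact_mod_cast Nat.div_le_self _ _
    have hmemU : ∀ a ∈ Bj, f a ∈ Finset.Icc 1 (2 ^ (j + 1)) := by
      intro a ha
      obtain ⟨f1, f2, f3, f4, f5, f6⟩ := facts a (hBjB ha)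
      rw [(Finset.mem_filter.mp ha).2] at f5
      exact Finset.mem_Icc.mpr ⟨f1, f5.le⟩
    have hmemV : ∀ a ∈ Bj, g a ∈ Finset.Icc 1 (n / 2 ^ j) := by
      intro a ha
      obtain ⟨f1, f2, f3, f4, f5, f6⟩ := facts a (hBjB ha)
      rw [(Finset.mem_filter.mp ha).2] at f6
      exact Finset.mem_Icc.mpr ⟨f2, f6⟩
    have p1 := sidon_piece (A' := B1) hA
      (((Finset.filter_subset _ _).trans hBjB).trans (hBA2.trans hs)) f g
      (fun a ha => (hfg a (hBjB (Finset.mem_filter.mp ha).1)).1)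
      (Finset.Icc 1 (2 ^ (j + 1))) (smoothS y (n / 2 ^ j))
      (fun a ha => hmemU a (Finset.mem_filter.mp ha).1)
      (fun a ha => Finset.mem_filter.mpr ⟨hmemV a (Finset.mem_filter.mp ha).1,
        (Finset.mem_filter.mp ha).2⟩)
      (2 * 2 ^ j) (n * (1 / 2) ^ j) (2 * κ * n) cU
      ((Nat.cast_le.mpr (Finset.card_le_card (Finset.filter_subset _ _))).trans cV)
      (by
        calc _ ≤ (2 * (2 : ℝ) ^ j) * (κ * (n * (1 / 2) ^ j)) :=
              mul_le_mul cU cS (by positivity) (by positivity)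
          _ = 2 * κ * n := by linear_combination κ * hprod)
    have p2 := sidon_piece (A' := B2) hA
      (((Finset.filter_subset _ _).trans hBjB).trans (hBA2.trans hs)) f g
      (fun a ha => (hfg a (hBjB (Finset.mem_filter.mp ha).1)).1)
      (roughS y (2 ^ (j + 1))) (Finset.Icc 1 (n / 2 ^ j))
      (fun a ha => by
        have ha1 := (Finset.mem_filter.mp ha).1
        have ha2 := (Finset.mem_filter.mp ha).2
        refine Finset.mem_filter.mpr ⟨hmemU a ha1, ?_⟩
        push Not at ha2
        obtain ⟨q, hq, hyq⟩ := ha2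
        intro p hp
        exact hyq.trans ((hfg a (hBjB ha1)).2.2.2 p hp q hq))
      (fun a ha => hmemV a (Finset.mem_filter.mp ha).1)
      (2 * 2 ^ j) (n * (1 / 2) ^ j) (2 * κ * n) 
      ((Nat.cast_le.mpr (Finset.card_le_card (Finset.filter_subset _ _))).trans cU) cV
      (by
        calc _ ≤ (κ * (2 * (2 : ℝ) ^ j)) * (n * (1 / 2) ^ j) :=
              mul_le_mul cR cV (by positivity) (by positivity)
          _ = 2 * κ * n := by linear_combination κ * hprod)
    rw [hc]; push_cast
    linarith
  have hBsum : (B.card : ℝ) = ∑ j ∈ J, ((B.filter fun a => Nat.log 2 (f a) = j).card : ℝ) := by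
    exact_mod_cast Finset.card_eq_sum_card_fiberwise (f := fun a => Nat.log 2 (f a)) (t := J)
      (fun a ha => hJmem a ha)
  have g1 : ∑ j ∈ J, (2 : ℝ) ^ j ≤ 2 * T ^ 2 :=
    sum_two_pow_le J _ (by positivity) fun j hj => (Finset.mem_filter.mp hj).2.2
  have g2 : ∑ j ∈ J, (1 / 2 : ℝ) ^ j ≤ 2 * (2 / T) := by
    refine sum_half_pow_le J _ (by positivity) fun j hj => ?_
    have := (Finset.mem_filter.mp hj).2.1
    rw [one_div, inv_pow, inv_eq_one_div, div_le_div_iff₀ (by positivity) hT0]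
    rw [pow_succ] at this
    linarith
  have hJc : (J.card : ℝ) ≤ Nat.log 2 n + 1 := by
    have := Finset.card_le_card (Finset.filter_subset (fun j : ℕ =>
      T < (2 : ℝ) ^ (j + 1) ∧ (2 : ℝ) ^ j ≤ T ^ 2) (Finset.range (Nat.log 2 n + 1)))
    rw [Finset.card_range, ← hJ] at this
    exact_mod_cast this
  have hpow : (2 * κ * n) ^ ((2 : ℝ) / 3) = (2 * κ) ^ ((2 : ℝ) / 3) * T ^ 2 := by
    rw [Real.mul_rpow (by positivity) (by positivity), ← hTn, ← Real.rpow_natCast T 3,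
      ← Real.rpow_mul hT0.le, ← Real.rpow_natCast T 2]
    norm_num
  have hBle : (B.card : ℝ) ≤ 64 * (2 * T ^ 2) + 32 * (4 * T ^ 2) +
      (Nat.log 2 n + 1) * (14 * ((2 * κ) ^ ((2 : ℝ) / 3) * T ^ 2)) := by
    rw [hBsum]
    refine (Finset.sum_le_sum hpiece).trans ?_
    rw [hpow]
    have : ∑ j ∈ J, 2 * (16 * (2 * (2 : ℝ) ^ j + n * (1 / 2) ^ j) +
        7 * ((2 * κ) ^ ((2 : ℝ) / 3) * T ^ 2)) = 64 * ∑ j ∈ J, (2 : ℝ) ^ j +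
        32 * (n * ∑ j ∈ J, (1 / 2 : ℝ) ^ j) +
        J.card * (14 * ((2 * κ) ^ ((2 : ℝ) / 3) * T ^ 2)) := by
      rw [Finset.mul_sum, Finset.mul_sum, Finset.mul_sum, ← nsmul_eq_mul, ← Finset.sum_const,
        ← Finset.sum_add_distrib, ← Finset.sum_add_distrib]
      apply Finset.sum_congr rfl
      intro j _
      ring
    rw [this]
    have hn4 : (n : ℝ) * ∑ j ∈ J, (1 / 2 : ℝ) ^ j ≤ 4 * T ^ 2 := by
      calc _ ≤ (n : ℝ) * (2 * (2 / T)) := by gcongr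
        _ = 4 * T ^ 2 := by rw [← hTn]; field_simp; norm_num
    gcongr
  have : (A2.card : ℝ) = B.card + ((A2.filter fun a : ℕ => ¬ T ≤ (a : ℝ)).card : ℝ) := by
    exact_mod_cast hsplit
  have hTT : T ≤ T ^ 2 := by nlinarith
  rw [this]
  nlinarith

theorem mulSidon3_card_upper_bound :
    ∀ ε : ℝ, 0 < ε → ∃ N : ℕ, ∀ n : ℕ, N ≤ n → ∀ A : Finset ℕ, A ⊆ Finset.Icc 1 n →
      MulSidon3 A →
      (A.card : ℝ) ≤ (Nat.primeCounting n : ℝ) + (Nat.primeCounting (n / 2) : ℝ) +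
        (n : ℝ) ^ ((2 : ℝ) / 3) *
          Real.log n ^ ((2 : ℝ) ^ ((1 : ℝ) / 3) - 1 / 3 + ε) := by
  intro ε hε
  have hlog : Filter.Tendsto (fun n : ℕ => Real.log n) Filter.atTop Filter.atTop :=
    Real.tendsto_log_atTop.comp tendsto_natCast_atTop_atTop
  have hev := hlog.eventually ((density_bounds.and final_asymp).and
    (Filter.eventually_ge_atTop 1))
  obtain ⟨N, hN⟩ := Filter.eventually_atTop.mp (hev.and (Filter.eventually_ge_atTop 1))
  refine ⟨N, fun n hn A hAn hA => ?_⟩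
  obtain ⟨⟨⟨⟨y, HR, HS⟩, hfin⟩, hL1⟩, hn1⟩ := hN n hn
  set L := Real.log n with hL
  have hn0 : (0 : ℝ) < n := by exact_mod_cast hn1
  have hexpL : Real.exp L = n := Real.exp_log hn0
  set T := Real.exp (L / 3) with hT
  have hT3 : T ^ 3 = n := by
    rw [hT, ← Real.exp_nat_mul, ← hexpL]; congr 1; push_cast; ring
  have hT2 : T ^ 2 = (n : ℝ) ^ ((2 : ℝ) / 3) := by
    rw [hT, ← Real.exp_nat_mul, Real.rpow_def_of_pos hn0]; congr 1; push_cast; ring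
  have hT1 : 1 ≤ T := Real.one_le_exp (by linarith)
  rw [hexpL] at HR HS
  classical
  set A1 := A.filter fun a : ℕ => ∃ p : ℕ, p ∈ a.primeFactors ∧ T ^ 2 < (p : ℝ) with hA1
  set A2 := A.filter fun a : ℕ => ¬ ∃ p : ℕ, p ∈ a.primeFactors ∧ T ^ 2 < (p : ℝ) with hA2
  have hc : A.card = A1.card + A2.card := (Finset.card_filter_add_card_filter_not _).symm
  have l1 := large_part hA (Finset.filter_subset _ _ : A1 ⊆ A) n hAn T (by linarith) hT3
    (fun a ha => (Finset.mem_filter.mp ha).2)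
  have l2 := small_part hA (Finset.filter_subset _ _ : A2 ⊆ A) n hAn T hT1 hT3 y
    (109 / Real.sqrt L) (by positivity) HR HS (fun a ha p hp => by
      have := (Finset.mem_filter.mp ha).2
      push Not at this
      exact this p hp)
  have hlog2 : (Nat.log 2 n : ℝ) ≤ 2 * L := by
    have h1 : ((2 ^ Nat.log 2 n : ℕ) : ℝ) ≤ n := by
      exact_mod_cast Nat.pow_log_le_self 2 (by omega)
    have h2 := Real.log_le_log (by positivity) h1
    push_cast at h2
    rw [Real.log_pow] at h2
    have := Real.log_two_gt_d9
    have : (0 : ℝ) ≤ Nat.log 2 n := by positivity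
    nlinarith
  have hexp : (0.9 : ℝ) ≤ (2 : ℝ) ^ ((1 : ℝ) / 3) - 1 / 3 + ε := by
    have : (1.25 : ℝ) ≤ (2 : ℝ) ^ ((1 : ℝ) / 3) := by
      rw [one_div, Real.le_rpow_inv_iff_of_pos (by norm_num) (by norm_num) (by norm_num)]
      norm_num
    linarith
  have hpw : L ^ (0.9 : ℝ) ≤ L ^ ((2 : ℝ) ^ ((1 : ℝ) / 3) - 1 / 3 + ε) :=
    Real.rpow_le_rpow_of_exponent_le hL1 hexp
  have l3 : T ^ 2 * (2 + (257 + 14 * (Nat.log 2 n + 1) *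
      (2 * (109 / Real.sqrt L)) ^ ((2 : ℝ) / 3))) ≤
      T ^ 2 * L ^ ((2 : ℝ) ^ ((1 : ℝ) / 3) - 1 / 3 + ε) := by
    apply mul_le_mul_of_nonneg_left _ (by positivity)
    refine le_trans ?_ (hfin.trans hpw)
    have h0 : 0 ≤ (2 * (109 / Real.sqrt L)) ^ ((2 : ℝ) / 3) := by positivity
    rw [← add_assoc]
    gcongr
  rw [← hT2, hc]
  push_cast
  linarith
end

section
/- There exists a constant c > 0 and an integer N such that for all n ≥ N, every multiplicative 3-Sidon subset A of {1,2,…,n} satisfies |A| ≤ π(n) + π(n/2) + c · n^{2/3} (log n)^{2^{1/3} − 1/3} (log log n)^2. -/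
section Combi
open Finset
open scoped Classical

/-- no six-cycle in the bipartite relation -/
def C6F (R : ℕ → ℕ → Prop) : Prop :=
  ∀ x₁ x₂ x₃ y₁ y₂ y₃ : ℕ, x₁ ≠ x₂ → x₁ ≠ x₃ → x₂ ≠ x₃ → y₁ ≠ y₂ → y₁ ≠ y₃ → y₂ ≠ y₃ →
    R x₁ y₁ → R x₂ y₁ → R x₂ y₂ → R x₃ y₂ → R x₃ y₃ → R x₁ y₃ → False

lemma C6F.flip {R : ℕ → ℕ → Prop} (h : C6F R) : C6F (fun y x => R x y) := by
  intro y1 y2 y3 x1 x2 x3 a1 a2 a3 b1 b2 b3 r1 r2 r3 r4 r5 r6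
  exact h x1 x2 x3 y2 y3 y1 b1 b2 b3 a3 a1.symm a2.symm r2 r3 r4 r5 r6 r1

lemma heavy_le_one {R : ℕ → ℕ → Prop} (h : C6F R) (X Y : Finset ℕ) (y x₀ : ℕ) (hx₀ : R x₀ y) :
    (X.filter (fun x => x ≠ x₀ ∧ R x y ∧ ¬ (Y.filter (fun b => R x₀ b ∧ R x b)).card ≤ 2)).card
      ≤ 1 := by
  rw [Finset.card_le_one]
  intro a ha b hb
  simp only [mem_filter, not_le] at ha hb
  by_contra hab
  obtain ⟨_, ha0, hay, ha3⟩ := ha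
  obtain ⟨_, hb0, hby, hb3⟩ := hb
  obtain ⟨b', hb', hb'y⟩ : ∃ b' ∈ (Y.filter (fun c => R x₀ c ∧ R a c)), b' ∉ ({y} : Finset ℕ) :=
    Finset.exists_mem_notMem_of_card_lt_card (by simp; omega)
  obtain ⟨c', hc', hc'y⟩ : ∃ b'' ∈ (Y.filter (fun c => R x₀ c ∧ R b c)),
      b'' ∉ ({y, b'} : Finset ℕ) :=
    Finset.exists_mem_notMem_of_card_lt_card (lt_of_le_of_lt (card_le_two) (by omega))
  simp only [mem_filter, mem_singleton, mem_insert, not_or] at hb' hb'y hc' hc'y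
  exact h a b x₀ y c' b' hab ha0 hb0 (Ne.symm hc'y.1) (Ne.symm hb'y) hc'y.2
    hay hby hc'.2.2 hc'.2.1 hb'.2.1 hb'.2.2

lemma light_ge {R : ℕ → ℕ → Prop} (h : C6F R) (X Y : Finset ℕ) (y x₀ : ℕ) (hx₀ : R x₀ y) :
    (X.filter (fun x => R x y)).card ≤
    (X.filter (fun x => x ≠ x₀ ∧ R x y ∧ (Y.filter (fun b => R x₀ b ∧ R x b)).card ≤ 2)).card + 2
    := by
  have h1 := heavy_le_one h X Y y x₀ hx₀
  have hs : (X.filter (fun x => R x y)) ⊆ 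
    (X.filter (fun x => x ≠ x₀ ∧ R x y ∧ (Y.filter (fun b => R x₀ b ∧ R x b)).card ≤ 2)) ∪
    ((X.filter (fun x => x ≠ x₀ ∧ R x y ∧ ¬ (Y.filter (fun b => R x₀ b ∧ R x b)).card ≤ 2)) ∪ {x₀})
      := by
    intro x hx
    simp only [mem_filter, mem_union, mem_singleton] at hx ⊢
    tauto
  refine (card_le_card hs).trans ((card_union_le _ _).trans ?_)
  have := card_union_le (X.filter (fun x => x ≠ x₀ ∧ R x y ∧ ¬ (Y.filter (fun b => R x₀ b ∧ R x b)).card ≤ 2)) {x₀}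
  simp only [card_singleton] at this
  omega

lemma lemA {R : ℕ → ℕ → Prop} (h : C6F R) (X Y : Finset ℕ) :
    ∑ y ∈ Y, (X.filter (fun x => R x y)).card ≤
      ∑ y ∈ Y, min (X.filter (fun x => R x y)).card 2 + 2 * X.card ^ 2 := by
  have key : ∀ y ∈ Y, (X.filter (fun x => R x y)).card ≤ min (X.filter (fun x => R x y)).card 2 +
      (bipartiteBelow (fun (p : ℕ × ℕ) y => (R p.1 y ∧ R p.2 y) ∧
        (Y.filter (fun b => R p.1 b ∧ R p.2 b)).card ≤ 2) (X ×ˢ X) y).card := by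
    intro y hy
    rcases (X.filter (fun x => R x y)).eq_empty_or_nonempty with h0 | ⟨x₀, hx₀⟩
    · simp [h0]
    · simp only [mem_filter] at hx₀
      have h1 := light_ge h X Y y x₀ hx₀.2
      have h2 : (X.filter (fun x => x ≠ x₀ ∧ R x y ∧ (Y.filter (fun b => R x₀ b ∧ R x b)).card ≤ 2)).card ≤ (bipartiteBelow (fun (p : ℕ × ℕ) y => (R p.1 y ∧ R p.2 y) ∧
        (Y.filter (fun b => R p.1 b ∧ R p.2 b)).card ≤ 2) (X ×ˢ X) y).card := by
        apply card_le_card_of_injOn (fun x => (x₀, x))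
        · intro x hx
          simp only [coe_filter, Set.mem_ofPred_eq, bipartiteBelow, mem_product] at hx ⊢
          exact ⟨⟨hx₀.1, hx.1⟩, ⟨hx₀.2, hx.2.2.1⟩, hx.2.2.2⟩
        · intro a _ b _ hab
          simpa using hab
      omega
  refine (sum_le_sum key).trans ?_
  rw [sum_add_distrib, ← sum_card_bipartiteAbove_eq_sum_card_bipartiteBelow]
  gcongr
  calc _ ≤ ∑ p ∈ X ×ˢ X, 2 := by
        apply sum_le_sum
        intro p _
        by_cases hp : (Y.filter (fun b => R p.1 b ∧ R p.2 b)).card ≤ 2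
        · simpa [bipartiteAbove, hp] using hp
        · simp [bipartiteAbove, hp]
    _ = _ := by simp [card_product]; ring

lemma lemB1 {R : ℕ → ℕ → Prop} (h : C6F R) (X Y : Finset ℕ) :
    ∑ p ∈ (X ×ˢ Y).filter (fun p => R p.1 p.2), 
      ((X.filter (fun x => R x p.2)).card - 2) * ((Y.filter (fun y => R p.1 y)).card - 2) ≤
      4 * (X.card * Y.card) := by
  set r : ℕ × ℕ → ℕ × ℕ → Prop := fun p q =>
    (q.1 ≠ p.1 ∧ R q.1 p.2 ∧ (Y.filter (fun b => R p.1 b ∧ R q.1 b)).card ≤ 2) ∧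
    (q.2 ≠ p.2 ∧ R p.1 q.2 ∧ (X.filter (fun b => R b p.2 ∧ R b q.2)).card ≤ 2) with hr
  have lower : ∀ p ∈ (X ×ˢ Y).filter (fun p => R p.1 p.2),
      ((X.filter (fun x => R x p.2)).card - 2) * ((Y.filter (fun y => R p.1 y)).card - 2) ≤
      (bipartiteAbove r (X ×ˢ Y) p).card := by
    intro p hp
    simp only [mem_filter, mem_product] at hp
    have h1 := light_ge h X Y p.2 p.1 hp.2
    have h2 := light_ge h.flip Y X p.1 p.2 hp.2
    have h3 : bipartiteAbove r (X ×ˢ Y) p = 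
      (X.filter (fun x => x ≠ p.1 ∧ R x p.2 ∧ (Y.filter (fun b => R p.1 b ∧ R x b)).card ≤ 2)) ×ˢ
      (Y.filter (fun x => x ≠ p.2 ∧ R p.1 x ∧ (X.filter (fun b => R b p.2 ∧ R b x)).card ≤ 2)) := by
      ext q
      simp only [bipartiteAbove, hr, mem_filter, mem_product]
      tauto
    rw [h3, card_product]
    gcongr <;> omega
  refine (sum_le_sum lower).trans ?_
  rw [sum_card_bipartiteAbove_eq_sum_card_bipartiteBelow]
  calc _ ≤ ∑ q ∈ X ×ˢ Y, 4 := by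
        apply sum_le_sum
        intro q _
        rcases (bipartiteBelow r ((X ×ˢ Y).filter (fun p => R p.1 p.2)) q).eq_empty_or_nonempty
          with h0 | ⟨p, hp⟩
        · simp [h0]
        · have hsub : bipartiteBelow r ((X ×ˢ Y).filter (fun p => R p.1 p.2)) q ⊆
            ((Y.filter (fun b => R p.1 b ∧ R q.1 b)).image (fun b => (p.1, b))) ∪
            ((X.filter (fun b => R b p.2 ∧ R b q.2)).image (fun b => (b, p.2))) := by
            intro s hs
            simp only [bipartiteBelow, hr, mem_filter, mem_product, mem_union, mem_image] at hs hp ⊢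
            obtain ⟨x1, y1⟩ := p
            obtain ⟨x2, y2⟩ := s
            obtain ⟨x, y⟩ := q
            simp only at hs hp ⊢
            by_cases hx : x2 = x1
            · left
              subst hx
              exact ⟨y2, ⟨hs.1.1.2, hs.1.2, hs.2.1.2.1⟩, rfl⟩
            by_cases hy : y2 = y1
            · right
              subst hy
              exact ⟨x2, ⟨hs.1.1.1, hs.1.2, hs.2.2.2.1⟩, rfl⟩
            exfalso
            exact h x x1 x2 y1 y y2 hp.2.1.1 hs.2.1.1 (Ne.symm hx) (Ne.symm hp.2.2.1) (Ne.symm hy)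
              hs.2.2.1 hp.2.1.2.1 hp.1.2 hp.2.2.2.1 hs.2.2.2.1 hs.1.2 hs.2.1.2.1
          simp only [bipartiteBelow, hr, mem_filter] at hp
          refine (card_le_card hsub).trans ((card_union_le _ _).trans ?_)
          have h1 := card_image_le (s := Y.filter (fun b => R p.1 b ∧ R q.1 b)) (f := fun b => (p.1, b))
          have h2 := card_image_le (s := X.filter (fun b => R b p.2 ∧ R b q.2)) (f := fun b => (b, p.2))
          omega
    _ = _ := by simp [card_product]; ring

lemma lemB {R : ℕ → ℕ → Prop} (h : C6F R) (X Y : Finset ℕ) :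
    (((X ×ˢ Y).filter (fun p => R p.1 p.2)).card : ℝ) ≤
      12 * ((X.card * Y.card : ℝ) ^ ((2:ℝ)/3) + X.card + Y.card) := by
  set E := (X ×ˢ Y).filter (fun p => R p.1 p.2) with hE
  set e := E.card with he
  set m := X.card with hm
  set N := Y.card with hN
  have hpos : (0:ℝ) ≤ ((m:ℝ) * N) ^ ((2:ℝ)/3) := by positivity
  by_cases h1 : (e : ℝ) ≤ 12 * m
  · have : (0:ℝ) ≤ N := by positivity
    linarith
  by_cases h2 : (e : ℝ) ≤ 12 * N
  · have : (0:ℝ) ≤ m := by positivity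
    linarith
  push Not at h1 h2
  have hm0 : 0 < m := by
    rcases Nat.eq_zero_or_pos m with h0 | h0
    · exfalso
      have : X = ∅ := by rw [← card_eq_zero]; omega
      have : e = 0 := by simp [he, hE, this]
      rw [this, h0] at h1; norm_num at h1
    · exact h0
  have hN0 : 0 < N := by
    rcases Nat.eq_zero_or_pos N with h0 | h0
    · exfalso
      have : Y = ∅ := by rw [← card_eq_zero]; omega
      have : e = 0 := by simp [he, hE, this]
      rw [this, h0] at h2; norm_num at h2
    · exact h0
  have h1' : 12 * m < e := by exact_mod_cast h1
  have h2' : 12 * N < e := by exact_mod_cast h2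
  set dX : ℕ → ℕ := fun x => (Y.filter (fun y => R x y)).card with hdX
  set dY : ℕ → ℕ := fun y => (X.filter (fun x => R x y)).card with hdY
  set G := E.filter (fun p => e ≤ 4 * m * dX p.1 ∧ e ≤ 4 * N * dY p.2) with hG
  have b1 : 4 * (E.filter (fun p => ¬ e ≤ 4 * m * dX p.1)).card ≤ e := by
    have : (E.filter (fun p => ¬ e ≤ 4 * m * dX p.1)).card = 
        ∑ x ∈ X, (if ¬ e ≤ 4 * m * dX x then dX x else 0) := by
      rw [card_eq_sum_card_fiberwise (f := Prod.fst) (t := X)]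
      · apply sum_congr rfl
        intro x hx
        split_ifs with hc
        · rw [card_eq_zero]
          ext p
          simp only [mem_filter, notMem_empty, iff_false]
          rintro ⟨⟨_, h3⟩, rfl⟩
          exact h3 hc
        · simp only [hdX]
          refine card_bij' (fun p _ => p.2) (fun y _ => (x, y)) ?_ ?_ ?_ ?_
          · intro p hp
            simp only [hE, mem_filter, mem_product] at hp ⊢
            obtain ⟨⟨⟨⟨_, _⟩, _⟩, _⟩, rfl⟩ := hp
            exact ⟨by assumption, by assumption⟩
          · intro p hp
            simp only [hE, mem_filter, mem_product] at hp ⊢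
            exact ⟨⟨⟨⟨hx, hp.1⟩, hp.2⟩, hc⟩, trivial⟩
          · intro p hp
            simp only [mem_filter] at hp
            ext <;> simp [hp.2]
          · intro p hp
            rfl
      · intro p hp
        simp only [hE, coe_filter, mem_filter, mem_product, Set.mem_ofPred_eq] at hp
        exact hp.1.1.1
    rw [this]
    have h3 : m * (4 * ∑ x ∈ X, (if ¬ e ≤ 4 * m * dX x then dX x else 0)) ≤ m * e := by
      rw [← mul_assoc, mul_sum]
      calc _ ≤ ∑ x ∈ X, e := by
            apply sum_le_sum
            intro x _
            split_ifs with hc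
            · simp
            · rw [mul_comm m 4]; omega
        _ = m * e := by simp [hm]
    exact le_of_mul_le_mul_left h3 hm0
  have b2 : 4 * (E.filter (fun p => ¬ e ≤ 4 * N * dY p.2)).card ≤ e := by
    have : (E.filter (fun p => ¬ e ≤ 4 * N * dY p.2)).card = 
        ∑ x ∈ Y, (if ¬ e ≤ 4 * N * dY x then dY x else 0) := by
      rw [card_eq_sum_card_fiberwise (f := Prod.snd) (t := Y)]
      · apply sum_congr rfl
        intro x hx
        split_ifs with hc
        · rw [card_eq_zero]
          ext p
          simp only [mem_filter, notMem_empty, iff_false]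
          rintro ⟨⟨_, h3⟩, rfl⟩
          exact h3 hc
        · simp only [hdY]
          refine card_bij' (fun p _ => p.1) (fun y _ => (y, x)) ?_ ?_ ?_ ?_
          · intro p hp
            simp only [hE, mem_filter, mem_product] at hp ⊢
            obtain ⟨⟨⟨⟨_, _⟩, _⟩, _⟩, rfl⟩ := hp
            exact ⟨by assumption, by assumption⟩
          · intro p hp
            simp only [hE, mem_filter, mem_product] at hp ⊢
            exact ⟨⟨⟨⟨hp.1, hx⟩, hp.2⟩, hc⟩, trivial⟩
          · intro p hp
            simp only [mem_filter] at hp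
            ext <;> simp [hp.2]
          · intro p hp
            rfl
      · intro p hp
        simp only [hE, coe_filter, mem_filter, mem_product, Set.mem_ofPred_eq] at hp
        exact hp.1.1.2
    rw [this]
    have h3 : N * (4 * ∑ x ∈ Y, (if ¬ e ≤ 4 * N * dY x then dY x else 0)) ≤ N * e := by
      rw [← mul_assoc, mul_sum]
      calc _ ≤ ∑ x ∈ Y, e := by
            apply sum_le_sum
            intro x _
            split_ifs with hc
            · simp
            · rw [mul_comm N 4]; omega
        _ = N * e := by simp [hN]
    exact le_of_mul_le_mul_left h3 hN0
  have b3 : e ≤ 2 * G.card := by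
    have : E ⊆ G ∪ (E.filter (fun p => ¬ e ≤ 4 * m * dX p.1) ∪ 
      E.filter (fun p => ¬ e ≤ 4 * N * dY p.2)) := by
      intro p hp
      simp only [hG, mem_union, mem_filter, hp]
      tauto
    have h3 := card_le_card this
    have h4 := card_union_le G (E.filter (fun p => ¬ e ≤ 4 * m * dX p.1) ∪ 
      E.filter (fun p => ¬ e ≤ 4 * N * dY p.2))
    have h5 := card_union_le (E.filter (fun p => ¬ e ≤ 4 * m * dX p.1)) 
      (E.filter (fun p => ¬ e ≤ 4 * N * dY p.2))
    omega
  have hmain := lemB1 h X Y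
  have hm0' : (0:ℝ) < m := by exact_mod_cast hm0
  have hN0' : (0:ℝ) < N := by exact_mod_cast hN0
  have he0 : (0:ℝ) < e := by nlinarith
  have low : (G.card : ℝ) * ((e / (12 * N)) * (e / (12 * m))) ≤ 4 * (m * N) := by
    calc (G.card : ℝ) * ((e / (12 * N)) * (e / (12 * m))) 
        = ∑ p ∈ G, ((e / (12 * N) : ℝ) * (e / (12 * m))) := by simp
      _ ≤ ∑ p ∈ G, (((dY p.2 - 2) * (dX p.1 - 2) : ℕ) : ℝ) := by
          apply sum_le_sum
          intro p hp
          simp only [hG, mem_filter] at hp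
          have g1 : (e : ℝ) ≤ 4 * m * dX p.1 := by exact_mod_cast hp.2.1
          have g2 : (e : ℝ) ≤ 4 * N * dY p.2 := by exact_mod_cast hp.2.2
          have i1 : (dX p.1 : ℝ) - 2 ≤ ((dX p.1 - 2 : ℕ) : ℝ) := by
            rw [sub_le_iff_le_add]; norm_cast; omega
          have i2 : (dY p.2 : ℝ) - 2 ≤ ((dY p.2 - 2 : ℕ) : ℝ) := by
            rw [sub_le_iff_le_add]; norm_cast; omega
          push_cast
          gcongr
          · refine le_trans ?_ i2
            rw [div_le_iff₀ (by positivity)]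
            nlinarith
          · refine le_trans ?_ i1
            rw [div_le_iff₀ (by positivity)]
            nlinarith
      _ ≤ ∑ p ∈ E, (((dY p.2 - 2) * (dX p.1 - 2) : ℕ) : ℝ) := by
          apply sum_le_sum_of_subset_of_nonneg (filter_subset _ _)
          intros; positivity
      _ ≤ _ := by exact_mod_cast hmain
  have low2 : (e:ℝ)^3 ≤ 1152 * (m * N)^2 := by
    have b3' : (e:ℝ) ≤ 2 * G.card := by exact_mod_cast b3
    have : (G.card : ℝ) * ((e / (12 * N)) * (e / (12 * m))) = G.card * e^2 / (144 * (m * N)) := by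
      field_simp; norm_num
    rw [this, div_le_iff₀ (by positivity)] at low
    nlinarith [sq_nonneg (e:ℝ)]
  have low3 : (e:ℝ) ≤ 12 * ((m * N : ℝ) ^ ((2:ℝ)/3)) := by
    refine le_of_pow_le_pow_left₀ (n := 3) (by norm_num) (by positivity) ?_
    have : (12 * ((m * N : ℝ) ^ ((2:ℝ)/3))) ^ 3 = 1728 * (m * N)^2 := by
      rw [mul_pow, ← Real.rpow_natCast (((m:ℝ) * N) ^ _), ← Real.rpow_mul (by positivity)]
      norm_num
    rw [this]
    nlinarith [sq_nonneg ((m:ℝ) * N)]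
  nlinarith
end Combi

section Decomp
open ArithmeticFunction

lemma exists_dvd_cardFactors {a : ℕ} (ha : a ≠ 0) (i : ℕ) (hi : i ≤ cardFactors a) :
    ∃ d, d ∣ a ∧ cardFactors d = i := by
  induction i with
  | zero => exact ⟨1, one_dvd _, by simp⟩
  | succ i ih =>
    obtain ⟨d, ⟨c, rfl⟩, hd⟩ := ih (by omega)
    have hd0 : d ≠ 0 := by rintro rfl; simp at ha
    have hc0 : c ≠ 0 := by rintro rfl; simp at ha
    rw [cardFactors_mul hd0 hc0] at hi
    have hc1 : c ≠ 1 := by rintro rfl; simp at hi; omega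
    have hp := Nat.minFac_prime hc1
    refine ⟨d * c.minFac, mul_dvd_mul_left d (Nat.minFac_dvd c), ?_⟩
    rw [cardFactors_mul hd0 hp.ne_zero, hd, cardFactors_apply_prime hp]

lemma exists_third {a : ℕ} (ha : a ≠ 0) :
    ∃ d, d ∣ a ∧ a ≤ d ^ 3 ∧ 3 * cardFactors d ≤ cardFactors a + 2 := by
  obtain ⟨q, hq⟩ : ∃ q, q = (cardFactors a + 2) / 3 := ⟨_, rfl⟩
  obtain ⟨d1, ⟨c, hac⟩, hd1⟩ := exists_dvd_cardFactors ha (min q (cardFactors a)) (by omega)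
  have hd10 : d1 ≠ 0 := by rintro rfl; simp at hac; omega
  have hc0 : c ≠ 0 := by rintro rfl; simp at hac; omega
  obtain ⟨d2, ⟨d3, rfl⟩, hd2⟩ := exists_dvd_cardFactors hc0 (min q (cardFactors c)) (by omega)
  have hd20 : d2 ≠ 0 := by rintro rfl; simp at hc0
  have hd30 : d3 ≠ 0 := by rintro rfl; simp at hc0
  have e1 : cardFactors a = cardFactors d1 + cardFactors (d2 * d3) := by
    rw [hac, cardFactors_mul hd10 hc0]
  have e2 : cardFactors (d2 * d3) = cardFactors d2 + cardFactors d3 := cardFactors_mul hd20 hd30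
  have key : a ≤ d1 ^ 3 ∨ a ≤ d2 ^ 3 ∨ a ≤ d3 ^ 3 := by
    by_contra hcon
    push Not at hcon
    obtain ⟨h1, h2, h3⟩ := hcon
    have : d1 ^ 3 * (d2 ^ 3 * d3 ^ 3) < a * (a * a) := by
      apply Nat.mul_lt_mul'' h1 (Nat.mul_lt_mul'' h2 h3)
    have h4 : d1 ^ 3 * (d2 ^ 3 * d3 ^ 3) = a * (a * a) := by rw [hac]; ring
    omega
  rcases key with h | h | h
  · exact ⟨d1, ⟨_, hac⟩, h, by omega⟩
  · exact ⟨d2, ⟨d1 * d3, by rw [hac]; ring⟩, h, by omega⟩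
  · exact ⟨d3, ⟨d1 * d2, by rw [hac]; ring⟩, h, by omega⟩

lemma exists_decomp {a : ℕ} (ha : a ≠ 0) :
    ∃ u v, a = u * v ∧ (u.Prime ∨ u ^ 3 ≤ a ^ 2) ∧ v ^ 3 ≤ a ^ 2 ∧
      2 * cardFactors u ≤ cardFactors v + 2 := by
  classical
  have hex : ∃ j, ∃ d, d ∣ a ∧ a ≤ d ^ 3 ∧ cardFactors d = j := 
    ⟨_, a, dvd_rfl, Nat.le_self_pow (by norm_num) a, rfl⟩
  obtain ⟨u, ⟨v, huv⟩, hu3, hj⟩ := Nat.find_spec hex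
  have hmin : ∀ d, d ∣ a → cardFactors d < cardFactors u → d ^ 3 < a := by
    intro d hd hlt
    rw [hj] at hlt
    have := Nat.find_min hex hlt
    by_contra hcon
    exact this ⟨d, hd, by omega, rfl⟩
  have hu0 : u ≠ 0 := by rintro rfl; simp at huv; omega
  have hv0 : v ≠ 0 := by rintro rfl; simp at huv; omega
  refine ⟨u, v, huv, ?_, ?_, ?_⟩
  · by_cases hu : u.Prime
    · exact Or.inl hu
    right
    by_cases hu1 : u = 1
    · rw [hu1, one_pow]; exact Nat.one_le_pow _ _ (Nat.pos_of_ne_zero ha)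
    have hp := Nat.minFac_prime hu1
    obtain ⟨w, hw⟩ := Nat.minFac_dvd u
    have hw0 : w ≠ 0 := by rintro rfl; simp at hw; omega
    have hcu : cardFactors u = 1 + cardFactors w := by
      conv_lhs => rw [hw]
      rw [cardFactors_mul hp.ne_zero hw0, cardFactors_apply_prime hp]
    have hw1 : cardFactors w ≠ 0 := by
      intro h0
      rw [cardFactors_eq_zero_iff_eq_zero_or_one] at h0
      rcases h0 with h0 | h0
      · exact hw0 h0
      · rw [h0, mul_one] at hw; exact hu (hw ▸ hp)
    have hua : u ∣ a := ⟨v, huv⟩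
    have h1 := hmin u.minFac ((Nat.minFac_dvd u).trans hua) (by rw [cardFactors_apply_prime hp]; omega)
    have h2 := hmin w ((Dvd.intro_left _ hw.symm).trans hua) (by omega)
    have : u ^ 3 = u.minFac ^ 3 * w ^ 3 := by 
      conv_lhs => rw [hw]
      ring
    rw [this, sq]
    exact Nat.mul_le_mul h1.le h2.le
  · have : a * v ^ 3 ≤ a * a ^ 2 := by
      calc a * v ^ 3 ≤ u ^ 3 * v ^ 3 := by gcongr
        _ = a * a ^ 2 := by rw [huv]; ring
    exact le_of_mul_le_mul_left this (by omega)
  · obtain ⟨d, hd, hd3, hd4⟩ := exists_third ha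
    have h1 : cardFactors u ≤ cardFactors d := by
      by_contra hcon
      have := hmin d hd (by omega)
      omega
    have : cardFactors a = cardFactors u + cardFactors v := by rw [huv, cardFactors_mul hu0 hv0]
    omega
end Decomp

section Analytic
open ArithmeticFunction Finset

lemma two_pow_cardFactors_le {n : ℕ} (hn : n ≠ 0) : 2 ^ cardFactors n ≤ n := by
  induction n using Nat.recOnMul with
  | zero => exact absurd rfl hn
  | one => simp
  | prime p hp => rw [cardFactors_apply_prime hp]; simpa using hp.two_le
  | mul a b iha ihb =>
    have ha : a ≠ 0 := by rintro rfl; simp at hn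
    have hb : b ≠ 0 := by rintro rfl; simp at hn
    rw [cardFactors_mul ha hb, pow_add]
    exact Nat.mul_le_mul (iha ha) (ihb hb)

lemma zpow_le {z : ℝ} (hz : 0 < z) (hz3 : z ^ 3 ≤ 2) {n : ℕ} (hn : n ≠ 0) :
    z ^ cardFactors n ≤ (n : ℝ) ^ ((1:ℝ)/3) := by
  refine le_of_pow_le_pow_left₀ (n := 3) (by norm_num) (by positivity) ?_
  rw [← Real.rpow_natCast ((n:ℝ) ^ _), ← Real.rpow_mul (by positivity)]
  norm_num
  rw [← pow_mul, mul_comm, pow_mul]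
  calc (z ^ 3) ^ cardFactors n ≤ 2 ^ cardFactors n := by gcongr
    _ ≤ n := by exact_mod_cast two_pow_cardFactors_le hn

/-- the completely multiplicative function `z ^ Ω` -/
noncomputable def FF (z : ℝ) : ArithmeticFunction ℝ :=
  ⟨fun n => if n = 0 then 0 else z ^ cardFactors n, by simp⟩

lemma FF_apply (z : ℝ) {n : ℕ} (hn : n ≠ 0) : FF z n = z ^ cardFactors n := by
  simp [FF, hn]

lemma FF_nonneg {z : ℝ} (hz : 0 < z) (n : ℕ) : 0 ≤ FF z n := by
  by_cases hn : n = 0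
  · simp [hn]
  · rw [FF_apply z hn]; positivity

lemma FF_mul (z : ℝ) (m n : ℕ) : FF z (m * n) = FF z m * FF z n := by
  by_cases hm : m = 0
  · simp [hm]
  by_cases hn : n = 0
  · simp [hn]
  rw [FF_apply z hm, FF_apply z hn, FF_apply z (mul_ne_zero hm hn), cardFactors_mul hm hn, pow_add]

lemma mangoldt_sum {z : ℝ} (hz : 0 < z) (hz3 : z ^ 3 ≤ 2) :
    ∃ C : ℝ, 0 < C ∧ ∀ t : ℕ, ∑ d ∈ Ioc 0 t, vonMangoldt d * FF z d ≤ C * t := by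
  obtain ⟨C, hC⟩ := Chebyshev.psi_sub_theta_le_mul_sqrt
  have hz2 : z ≤ 2 := by
    by_contra h
    push Not at h
    have : (2:ℝ) ^ 3 < z ^ 3 := by gcongr
    linarith
  refine ⟨2 * Real.log 4 + |C|, by positivity, fun t => ?_⟩
  rcases Nat.eq_zero_or_pos t with rfl | ht
  · simp
  have ht1 : (1:ℝ) ≤ t := by exact_mod_cast ht
  rw [← sum_filter_add_sum_filter_not (Ioc 0 t) (fun d => d.Prime)]
  have h1 : ∑ d ∈ Ioc 0 t with d.Prime, vonMangoldt d * FF z d ≤ 2 * Real.log 4 * t := by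
    calc _ ≤ ∑ d ∈ Ioc 0 t with d.Prime, Real.log d * 2 := by
          apply sum_le_sum
          intro d hd
          have hp := (mem_filter.mp hd).2
          rw [vonMangoldt_apply_prime hp, FF_apply z hp.ne_zero, cardFactors_apply_prime hp, pow_one]
          have := Real.log_natCast_nonneg d
          gcongr
      _ = 2 * Chebyshev.theta t := by
          rw [← sum_mul, Chebyshev.theta]
          simp [mul_comm]
      _ ≤ _ := by
          have := Chebyshev.theta_le_log4_mul_x (x := t) (by positivity)
          linarith
  have h2 : ∑ d ∈ Ioc 0 t with ¬ d.Prime, vonMangoldt d * FF z d ≤ |C| * t := by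
    calc _ ≤ ∑ d ∈ Ioc 0 t with ¬ d.Prime, vonMangoldt d * (t:ℝ) ^ ((1:ℝ)/3) := by
          apply sum_le_sum
          intro d hd
          simp only [mem_filter, mem_Ioc] at hd
          have hd0 : d ≠ 0 := by omega
          rw [FF_apply z hd0]
          have := vonMangoldt_nonneg (n := d)
          gcongr
          refine (zpow_le hz hz3 hd0).trans ?_
          have : (d:ℝ) ≤ t := by exact_mod_cast hd.1.2
          gcongr
      _ = (Chebyshev.psi t - Chebyshev.theta t) * (t:ℝ) ^ ((1:ℝ)/3) := by
          rw [← sum_mul, Chebyshev.psi_sub_theta_eq_sum_not_prime]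
          simp
      _ ≤ (|C| * Real.sqrt t) * (t:ℝ) ^ ((1:ℝ)/3) := by
          gcongr
          refine (hC t).trans ?_
          gcongr
          exact le_abs_self C
      _ = |C| * (t:ℝ) ^ ((5:ℝ)/6) := by
          rw [Real.sqrt_eq_rpow, mul_assoc, ← Real.rpow_add (by positivity)]
          norm_num
      _ ≤ |C| * (t:ℝ) ^ (1:ℝ) := by
          gcongr
          norm_num
      _ = _ := by simp
  linarith

lemma log_mul_sum {z : ℝ} (hz : 0 < z) (hz3 : z ^ 3 ≤ 2) :
    ∃ C : ℝ, 0 < C ∧ ∀ x : ℕ, 0 < x → Real.log x * ∑ n ∈ Ioc 0 x, FF z n ≤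
      C * x * ∑ n ∈ Ioc 0 x, FF z n / n := by
  obtain ⟨C, hC0, hC⟩ := mangoldt_sum hz hz3
  refine ⟨C + 1, by positivity, fun x hx => ?_⟩
  have e1 : ∑ n ∈ Ioc 0 x, FF z n * Real.log n ≤ C * x * ∑ n ∈ Ioc 0 x, FF z n / n := by
    have : ∀ n, FF z n * Real.log n = (FF z * (pmul vonMangoldt (FF z))) n := by
      intro n
      rw [ArithmeticFunction.mul_apply, ← vonMangoldt_sum,
        Nat.sum_divisorsAntidiagonal' (f := fun a b => FF z a * (pmul vonMangoldt (FF z)) b), mul_sum]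
      apply sum_congr rfl
      intro d hd
      simp only [pmul_apply]
      have hdn := Nat.dvd_of_mem_divisors hd
      rw [mul_left_comm, ← FF_mul, Nat.div_mul_cancel hdn]
      ring
    simp_rw [this]
    rw [sum_Ioc_mul_eq_sum_sum, mul_sum]
    apply sum_le_sum
    intro m hm
    have hm0 := (mem_Ioc.mp hm).1
    have h2 : ∑ d ∈ Ioc 0 (x / m), (pmul vonMangoldt (FF z)) d ≤ C * (x / m) := by
      refine (hC (x / m)).trans ?_
      gcongr
      exact Nat.cast_div_le
    calc _ ≤ FF z m * (C * (x / m)) := by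
          gcongr
          exact FF_nonneg hz m
      _ = _ := by ring
  have e2 : ∑ n ∈ Ioc 0 x, FF z n * (Real.log x - Real.log n) ≤ x * ∑ n ∈ Ioc 0 x, FF z n / n := by
    rw [mul_sum]
    apply sum_le_sum
    intro m hm
    have hm0 := (mem_Ioc.mp hm).1
    have hm0' : (0:ℝ) < m := by exact_mod_cast hm0
    have hx0' : (0:ℝ) < x := by exact_mod_cast hx
    rw [← Real.log_div hx0'.ne' hm0'.ne']
    have h3 : Real.log (x / m) ≤ x / m := (Real.log_le_sub_one_of_pos (by positivity)).trans (by linarith)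
    calc _ ≤ FF z m * (x / m) := by
          gcongr
          exact FF_nonneg hz m
      _ = _ := by ring
  have e3 : Real.log x * ∑ n ∈ Ioc 0 x, FF z n = ∑ n ∈ Ioc 0 x, FF z n * Real.log n + 
      ∑ n ∈ Ioc 0 x, FF z n * (Real.log x - Real.log n) := by
    rw [← sum_add_distrib, mul_sum]
    apply sum_congr rfl
    intros; ring
  rw [e3]
  linarith

lemma termwise {z t : ℝ} (hz : 0 < z) (hz2 : z ≤ 7/5) (ht : 0 ≤ t) (ht2 : t ≤ 1/2) :
    (1 - z * t)⁻¹ ≤ ((1 - t)⁻¹) ^ z * (1 - t ^ 2)⁻¹ := by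
  have hzt : 0 < 1 - z * t := by nlinarith
  have h1t : 0 < 1 - t := by linarith
  have h1t2 : 0 < 1 - t ^ 2 := by nlinarith
  rw [Real.inv_rpow h1t.le, ← mul_inv]
  apply inv_anti₀ (by positivity)
  by_cases hz1 : z ≤ 1
  · have := rpow_one_add_le_one_add_mul_self (s := -t) (by linarith) hz.le hz1
    have h2 : (1 - t) ^ z ≤ 1 - z * t := by
      calc (1 - t) ^ z = (1 + -t) ^ z := by ring_nf
        _ ≤ _ := this
        _ = _ := by ring
    have h3 : 0 ≤ (1 - t) ^ z := by positivity
    nlinarith [sq_nonneg t]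
  · push Not at hz1
    have := rpow_one_add_le_one_add_mul_self (s := -t) (p := z - 1) (by linarith) (by linarith) (by linarith)
    have h2 : (1 - t) ^ z ≤ (1 - t) * (1 - (z - 1) * t) := by
      calc (1 - t) ^ z = (1 - t) ^ (1 + (z - 1)) := by ring_nf
        _ = (1 - t) * (1 - t) ^ (z - 1) := by rw [Real.rpow_add h1t, Real.rpow_one]
        _ = (1 - t) * (1 + -t) ^ (z - 1) := by ring_nf
        _ ≤ (1 - t) * (1 + (z - 1) * -t) := by gcongr
        _ = _ := by ring
    obtain ⟨w, rfl⟩ : ∃ w, z = w + 1 := ⟨z - 1, by ring⟩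
    have hw0 : 0 < w := by linarith
    have hw1 : w ≤ 2/5 := by linarith
    simp only [add_sub_cancel_right] at h2
    have h4 : w ≤ (1 - t) * (1 - w * t) := by
      have : (1/2:ℝ) * (4/5) ≤ (1 - t) * (1 - w * t) := by
        gcongr
        · linarith
        · nlinarith
      linarith
    calc (1 - t) ^ (w + 1) * (1 - t ^ 2) ≤ (1 - t) * (1 - w * t) * (1 - t ^ 2) := by gcongr
      _ = 1 - (w+1) * t - t ^ 2 * ((1 - t) * (1 - w * t) - w) := by ring
      _ ≤ _ := by nlinarith [sq_nonneg t]

/-- completely multiplicative function `n ↦ z ^ Ω(n) n ^ (-s)` as a hom. -/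
noncomputable def GG (z s : ℝ) : ℕ →* ℝ where
  toFun n := FF z n * (n : ℝ) ^ (-s)
  map_one' := by simp [FF]
  map_mul' m n := by
    rw [FF_mul, Nat.cast_mul, Real.mul_rpow (by positivity) (by positivity)]; ring

lemma GG_apply (z s : ℝ) (n : ℕ) : GG z s n = FF z n * (n : ℝ) ^ (-s) := rfl

lemma GG_prime (z s : ℝ) {p : ℕ} (hp : p.Prime) : GG z s p = z * (p : ℝ) ^ (-s) := by
  rw [GG_apply, FF_apply z hp.ne_zero, cardFactors_apply_prime hp, pow_one]

lemma p_rpow_le {s : ℝ} (hs : 1 ≤ s) {p : ℕ} (hp : p.Prime) : (p : ℝ) ^ (-s) ≤ 1 / 2 := by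
  have h2 : (2:ℝ) ≤ p := by exact_mod_cast hp.two_le
  calc (p : ℝ) ^ (-s) ≤ (p:ℝ) ^ (-1:ℝ) := by
        apply Real.rpow_le_rpow_of_exponent_le <;> linarith
    _ = 1 / p := by rw [Real.rpow_neg_one]; simp
    _ ≤ 1 / 2 := by gcongr

lemma GG_lt_one {z s : ℝ} (hz : 0 < z) (hz2 : z ≤ 7/5) (hs : 1 ≤ s) {p : ℕ} (hp : p.Prime) :
    ‖GG z s p‖ < 1 := by
  rw [GG_prime z s hp, Real.norm_of_nonneg (by positivity)]
  have := p_rpow_le hs hp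
  have h0 : 0 ≤ (p : ℝ) ^ (-s) := by positivity
  nlinarith

lemma GG_nonneg {z s : ℝ} (hz : 0 < z) (n : ℕ) : 0 ≤ GG z s n := by
  rw [GG_apply]
  have := FF_nonneg hz n
  positivity

lemma sum_le_prod {z s : ℝ} (hz : 0 < z) (hz2 : z ≤ 7/5) (hs : 1 ≤ s) (x : ℕ) :
    ∑ n ∈ Ioc 0 x, GG z s n ≤ ∏ p ∈ (x+1).primesBelow, (1 - GG z s p)⁻¹ := by
  have h := (EulerProduct.summable_and_hasSum_smoothNumbers_prod_primesBelow_geometric 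
    (f := GG z s) (fun {p} hp => GG_lt_one hz hz2 hs hp) (x+1)).2
  rw [← h.tsum_eq, tsum_subtype (Nat.smoothNumbers (x+1)) (GG z s)]
  have hs : Summable ((Nat.smoothNumbers (x+1)).indicator (GG z s)) := 
    summable_subtype_iff_indicator.mp h.summable
  refine le_trans (le_of_eq ?_) (hs.sum_le_tsum (Ioc 0 x) ?_)
  · apply sum_congr rfl
    intro n hn
    rw [mem_Ioc] at hn
    rw [Set.indicator_of_mem (Nat.mem_smoothNumbers_of_lt hn.1 (by omega))]
  · intro n _
    exact Set.indicator_nonneg (fun n _ => GG_nonneg hz n) n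

lemma GG_one_apply {s : ℝ} (hs : 1 < s) (n : ℕ) : GG 1 s n = 1 / (n:ℝ) ^ s := by
  rw [GG_apply]
  by_cases hn : n = 0
  · subst hn
    simp only [ArithmeticFunction.map_zero, zero_mul, Nat.cast_zero]
    rw [Real.zero_rpow (by linarith)]; simp
  · rw [FF_apply _ hn, one_pow, one_mul, Real.rpow_neg (by positivity), one_div]

lemma prod_le_tsum {s : ℝ} (hs : 1 < s) (x : ℕ) :
    ∏ p ∈ x.primesBelow, (1 - (p:ℝ) ^ (-s))⁻¹ ≤ ∑' n : ℕ, 1 / (n:ℝ) ^ s := by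
  have hsum : Summable (GG 1 s) := by
    refine (Real.summable_one_div_nat_rpow.mpr hs).congr fun n => ?_
    rw [GG_one_apply hs]
  have h := EulerProduct.prod_primesBelow_geometric_eq_tsum_smoothNumbers hsum x
  calc _ = ∏ p ∈ x.primesBelow, (1 - GG 1 s p)⁻¹ := by
        apply prod_congr rfl
        intro p hp
        rw [GG_prime 1 s (Nat.prime_of_mem_primesBelow hp), one_mul]
    _ ≤ ∑' n : ℕ, GG 1 s n := by
        rw [h]
        exact hsum.tsum_subtype_le _ _ (fun n => GG_nonneg one_pos n)
    _ = _ := by simp_rw [GG_one_apply hs]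

lemma sum_GG_le {z s : ℝ} (hz : 0 < z) (hz2 : z ≤ 7/5) (hs : 1 < s) (x : ℕ) :
    ∑ n ∈ Ioc 0 x, GG z s n ≤ (∑' n : ℕ, 1 / (n:ℝ) ^ s) ^ z * ∑' n : ℕ, 1 / (n:ℝ) ^ (2:ℝ) := by
  refine (sum_le_prod hz hz2 hs.le x).trans ?_
  calc _ ≤ ∏ p ∈ (x+1).primesBelow, (((1 - (p:ℝ) ^ (-s))⁻¹) ^ z * (1 - (p:ℝ) ^ (-(2:ℝ)))⁻¹) := by
        apply prod_le_prod
        · intro p hp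
          have := GG_lt_one hz hz2 hs.le (Nat.prime_of_mem_primesBelow hp)
          have h2 := (Real.le_norm_self _).trans_lt this
          rw [inv_nonneg]; linarith
        · intro p hp
          have hpp := Nat.prime_of_mem_primesBelow hp
          have h2 : (2:ℝ) ≤ p := by exact_mod_cast hpp.two_le
          rw [GG_prime z s hpp]
          have ht := p_rpow_le hs.le hpp
          have ht0 : 0 ≤ (p : ℝ) ^ (-s) := by positivity
          refine (termwise hz hz2 ht0 ht).trans ?_
          have h3 : 0 < 1 - (p : ℝ) ^ (-s) := by linarith
          have h4 : ((p : ℝ) ^ (-s)) ^ 2 ≤ (p:ℝ) ^ (-(2:ℝ)) := by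
            rw [← Real.rpow_natCast ((p:ℝ) ^ _), ← Real.rpow_mul (by positivity)]
            apply Real.rpow_le_rpow_of_exponent_le
            · linarith
            · push_cast; linarith
          have h5 := p_rpow_le (s := 2) (by norm_num) hpp
          gcongr
          linarith
    _ = (∏ p ∈ (x+1).primesBelow, (1 - (p:ℝ) ^ (-s))⁻¹) ^ z * 
        ∏ p ∈ (x+1).primesBelow, (1 - (p:ℝ) ^ (-(2:ℝ)))⁻¹ := by
        rw [prod_mul_distrib, Real.finsetProd_rpow]
        intro p hp
        have := p_rpow_le hs.le (Nat.prime_of_mem_primesBelow hp)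
        rw [inv_nonneg]; linarith
    _ ≤ _ := by
        have n1 : ∀ s : ℝ, 1 < s → 0 ≤ ∏ p ∈ (x+1).primesBelow, (1 - (p:ℝ) ^ (-s))⁻¹ := by
          intro s hs
          apply prod_nonneg
          intro p hp
          have := p_rpow_le hs.le (Nat.prime_of_mem_primesBelow hp)
          rw [inv_nonneg]; linarith
        gcongr
        · exact n1 2 (by norm_num)
        · exact n1 s hs
        · exact prod_le_tsum hs _
        · exact prod_le_tsum (by norm_num) _

lemma sum_div_le {z : ℝ} (hz : 0 < z) (hz2 : z ≤ 7/5) :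
    ∃ C : ℝ, 0 < C ∧ ∃ x₀ : ℕ, ∀ x : ℕ, x₀ ≤ x → 
      ∑ n ∈ Ioc 0 x, FF z n / n ≤ C * Real.log x ^ z := by
  set K : ℝ := ∑' n : ℕ, 1 / (n:ℝ) ^ (2:ℝ) with hK
  have hK0 : 0 ≤ K := tsum_nonneg fun n => by positivity
  have hev : ∀ᶠ s in nhdsWithin (1:ℝ) (Set.Ioi 1), (s - 1) * ∑' (n : ℕ), 1 / (n : ℝ) ^ s < 2 :=
    tendsto_sub_mul_tsum_nat_rpow.eventually_lt_const (by norm_num)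
  have htend : Filter.Tendsto (fun x : ℕ => 1 + 1 / Real.log x) Filter.atTop 
      (nhdsWithin (1:ℝ) (Set.Ioi 1)) := by
    rw [tendsto_nhdsWithin_iff]
    have hl : Filter.Tendsto (fun x : ℕ => Real.log x) Filter.atTop Filter.atTop :=
      Real.tendsto_log_atTop.comp tendsto_natCast_atTop_atTop
    constructor
    · have := (hl.inv_tendsto_atTop).const_add (1:ℝ)
      simpa using this
    · filter_upwards [hl.eventually_gt_atTop 0] with x hx
      simp only [Set.mem_Ioi]
      have : 0 < 1 / Real.log x := by positivity
      linarith
  obtain ⟨x₀, hx₀⟩ := Filter.eventually_atTop.mp (htend.eventually hev)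
  refine ⟨Real.exp 1 * (2 ^ z * K + 1), by positivity, max x₀ 3, fun x hx => ?_⟩
  have hx3 : 3 ≤ x := (le_max_right _ _).trans hx
  have hx1 : (1:ℝ) < x := by exact_mod_cast (by omega : 1 < x)
  have hlog : 0 < Real.log x := Real.log_pos hx1
  have h1 := hx₀ x ((le_max_left _ _).trans hx)
  set s := 1 + 1 / Real.log x with hs
  have hs1 : 1 < s := by
    have : 0 < 1 / Real.log x := by positivity
    linarith
  have hZ : ∑' (n : ℕ), 1 / (n : ℝ) ^ s ≤ 2 * Real.log x := by
    have : (s - 1) = 1 / Real.log x := by rw [hs]; ring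
    rw [this, one_div_mul_eq_div, div_lt_iff₀ hlog] at h1
    exact h1.le
  have hZ0 : 0 ≤ ∑' (n : ℕ), 1 / (n : ℝ) ^ s := tsum_nonneg fun n => by positivity
  calc ∑ n ∈ Ioc 0 x, FF z n / n ≤ ∑ n ∈ Ioc 0 x, Real.exp 1 * GG z s n := by
        apply sum_le_sum
        intro n hn
        rw [mem_Ioc] at hn
        have hn0 : (0:ℝ) < n := by exact_mod_cast hn.1
        have hnx : (n:ℝ) ≤ x := by exact_mod_cast hn.2
        rw [GG_apply]
        have h2 : (n:ℝ) ^ (1 / Real.log x) ≤ Real.exp 1 := by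
          rw [Real.rpow_def_of_pos hn0]
          apply Real.exp_le_exp.mpr
          rw [mul_one_div, div_le_one hlog]
          exact Real.log_le_log hn0 hnx
        have h3 : (1:ℝ) / n ≤ Real.exp 1 * (n:ℝ) ^ (-s) := by
          calc (1:ℝ) / n = (n:ℝ) ^ (1 / Real.log x) * (n:ℝ) ^ (-s) := by
                rw [← Real.rpow_add hn0, hs]
                have : 1 / Real.log x + -(1 + 1 / Real.log x) = -1 := by ring
                rw [this, Real.rpow_neg_one, one_div]
            _ ≤ _ := by gcongr
        calc FF z n / n = FF z n * (1 / n) := by ring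
          _ ≤ FF z n * (Real.exp 1 * (n:ℝ) ^ (-s)) := by
              gcongr
              exact FF_nonneg hz n
          _ = _ := by ring
    _ = Real.exp 1 * ∑ n ∈ Ioc 0 x, GG z s n := by rw [mul_sum]
    _ ≤ Real.exp 1 * ((2 * Real.log x) ^ z * K) := by
        gcongr
        refine (sum_GG_le hz hz2 hs1 x).trans ?_
        gcongr
    _ = Real.exp 1 * (2 ^ z * K) * Real.log x ^ z := by
        rw [Real.mul_rpow (by norm_num) hlog.le]; ring
    _ ≤ _ := by
        gcongr
        linarith

lemma sum_FF_le {z : ℝ} (hz : 0 < z) (hz3 : z ^ 3 ≤ 2) :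
    ∃ C : ℝ, 0 < C ∧ ∃ x₀ : ℕ, ∀ x : ℕ, x₀ ≤ x → 
      ∑ n ∈ Ioc 0 x, FF z n ≤ C * x * Real.log x ^ (z - 1) := by
  have hz2 : z ≤ 7/5 := by
    by_contra h
    push Not at h
    have : (7/5:ℝ) ^ 3 < z ^ 3 := by gcongr
    norm_num at this; linarith
  obtain ⟨C, hC, x₀, h1⟩ := sum_div_le hz hz2
  obtain ⟨D, hD, h2⟩ := log_mul_sum hz hz3
  refine ⟨D * C, by positivity, max x₀ 3, fun x hx => ?_⟩
  have hx3 : 3 ≤ x := (le_max_right _ _).trans hx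
  have hx1 : (1:ℝ) < x := by exact_mod_cast (by omega : 1 < x)
  have hlog : 0 < Real.log x := Real.log_pos hx1
  have h3 := h2 x (by omega)
  have h4 := h1 x ((le_max_left _ _).trans hx)
  rw [Real.rpow_sub_one hlog.ne', mul_div_assoc', le_div_iff₀ hlog]
  calc _ = Real.log x * ∑ n ∈ Ioc 0 x, FF z n := by ring
    _ ≤ _ := h3
    _ ≤ D * x * (C * Real.log x ^ z) := by gcongr
    _ = _ := by ring
end Analytic

section Assembly
open Finset
open scoped Classical

/-- chosen decomposition -/
noncomputable def dec (a : ℕ) : ℕ × ℕ :=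
  if h : ∃ p : ℕ × ℕ, a = p.1 * p.2 ∧ (p.1.Prime ∨ p.1 ^ 3 ≤ a ^ 2) ∧ p.2 ^ 3 ≤ a ^ 2 ∧
      2 * ArithmeticFunction.cardFactors p.1 ≤ ArithmeticFunction.cardFactors p.2 + 2
    then h.choose else 0

lemma dec_spec {a : ℕ} (ha : a ≠ 0) : a = (dec a).1 * (dec a).2 ∧ 
    ((dec a).1.Prime ∨ (dec a).1 ^ 3 ≤ a ^ 2) ∧ (dec a).2 ^ 3 ≤ a ^ 2 ∧
      2 * ArithmeticFunction.cardFactors (dec a).1 ≤ ArithmeticFunction.cardFactors (dec a).2 + 2 := by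
  have h : ∃ p : ℕ × ℕ, a = p.1 * p.2 ∧ (p.1.Prime ∨ p.1 ^ 3 ≤ a ^ 2) ∧ p.2 ^ 3 ≤ a ^ 2 ∧
      2 * ArithmeticFunction.cardFactors p.1 ≤ ArithmeticFunction.cardFactors p.2 + 2 := by
    obtain ⟨u, v, h⟩ := exists_decomp ha
    exact ⟨(u, v), h⟩
  have e : dec a = h.choose := by rw [dec, dif_pos h]
  rw [e]
  exact h.choose_spec

/-- edge relation -/
def RR (B : Finset ℕ) (u v : ℕ) : Prop := ∃ a ∈ B, dec a = (u, v)

lemma RR_C6F {A B : Finset ℕ} (hA : MulSidon3 A) (hBA : B ⊆ A) (hB : ∀ a ∈ B, a ≠ 0) :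
    C6F (RR B) := by
  intro x1 x2 x3 y1 y2 y3 a1 a2 a3 b1 b2 b3 r1 r2 r3 r4 r5 r6
  obtain ⟨c1, m1, e1⟩ := r1
  obtain ⟨c2, m2, e2⟩ := r2
  obtain ⟨c3, m3, e3⟩ := r3
  obtain ⟨c4, m4, e4⟩ := r4
  obtain ⟨c5, m5, e5⟩ := r5
  obtain ⟨c6, m6, e6⟩ := r6
  have f1 := (dec_spec (hB _ m1)).1
  have f2 := (dec_spec (hB _ m2)).1
  have f3 := (dec_spec (hB _ m3)).1
  have f4 := (dec_spec (hB _ m4)).1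
  have f5 := (dec_spec (hB _ m5)).1
  have f6 := (dec_spec (hB _ m6)).1
  rw [e1] at f1
  rw [e2] at f2
  rw [e3] at f3
  rw [e4] at f4
  rw [e5] at f5
  rw [e6] at f6
  simp only at f1 f2 f3 f4 f5 f6
  refine hA ⟨c1, c3, c5, c2, c4, c6, hBA m1, hBA m3, hBA m5, hBA m2, hBA m4, hBA m6, ?_, ?_⟩
  · have key : ∀ c c' x y x' y', dec c = (x, y) → dec c' = (x', y') → (x ≠ x' ∨ y ≠ y') → c ≠ c' := by
      rintro c c' x y x' y' h1 h2 h3 rfl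
      rw [h1] at h2
      simp only [Prod.mk.injEq] at h2
      tauto
    simp only [List.nodup_cons, List.mem_cons, List.not_mem_nil, or_false, not_or, not_false_eq_true,
      List.nodup_nil, and_true]
    refine ⟨⟨?_, ?_, ?_, ?_, ?_⟩, ⟨?_, ?_, ?_, ?_⟩, ⟨?_, ?_, ?_⟩, ⟨?_, ?_⟩, ?_⟩
    · exact key _ _ _ _ _ _ e1 e3 (by tauto)
    · exact key _ _ _ _ _ _ e1 e5 (by tauto)
    · exact key _ _ _ _ _ _ e1 e2 (by tauto)
    · exact key _ _ _ _ _ _ e1 e4 (by tauto)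
    · exact key _ _ _ _ _ _ e1 e6 (by tauto)
    · exact key _ _ _ _ _ _ e3 e5 (by tauto)
    · exact key _ _ _ _ _ _ e3 e2 (by tauto)
    · exact key _ _ _ _ _ _ e3 e4 (by tauto)
    · exact key _ _ _ _ _ _ e3 e6 (by tauto)
    · exact key _ _ _ _ _ _ e5 e2 (by tauto)
    · exact key _ _ _ _ _ _ e5 e4 (by tauto)
    · exact key _ _ _ _ _ _ e5 e6 (by tauto)
    · exact key _ _ _ _ _ _ e2 e4 (by tauto)
    · exact key _ _ _ _ _ _ e2 e6 (by tauto)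
    · exact key _ _ _ _ _ _ e4 e6 (by tauto)
  · rw [f1, f2, f3, f4, f5, f6]; ring

lemma dec_inj {B : Finset ℕ} (hB : ∀ a ∈ B, a ≠ 0) : Set.InjOn dec (B : Set ℕ) := by
  intro a ha b hb hab
  rw [(dec_spec (hB a ha)).1, (dec_spec (hB b hb)).1, hab]

lemma piece {A B : Finset ℕ} (hA : MulSidon3 A) (hBA : B ⊆ A) (hB : ∀ a ∈ B, a ≠ 0)
    (X Y : Finset ℕ) (hX : ∀ a ∈ B, (dec a).1 ∈ X) (hY : ∀ a ∈ B, (dec a).2 ∈ Y) :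
    (B.card : ℝ) ≤ 12 * ((X.card * Y.card : ℝ) ^ ((2:ℝ)/3) + X.card + Y.card) := by
  refine le_trans ?_ (lemB (RR_C6F hA hBA hB) X Y)
  norm_cast
  apply card_le_card_of_injOn dec
  · intro a ha
    have ha' : a ∈ B := ha
    simp only [coe_filter, mem_product, Set.mem_ofPred_eq]
    exact ⟨⟨hX a ha', hY a ha'⟩, a, ha', rfl⟩
  · exact dec_inj hB

lemma prime_piece {A B : Finset ℕ} (hA : MulSidon3 A) (hBA : B ⊆ A) (n : ℕ)
    (hAn : A ⊆ Icc 1 n) (hp : ∀ a ∈ B, (dec a).1.Prime) (hl : ∀ a ∈ B, n ^ 2 < (dec a).1 ^ 3)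
    (T : ℝ) (hT : 0 ≤ T) (hTn : T ^ 3 = n) :
    (B.card : ℝ) ≤ Nat.primeCounting n + Nat.primeCounting (n / 2) + 2 * T ^ 2 := by
  have hB : ∀ a ∈ B, a ≠ 0 := fun a ha => by
    have := mem_Icc.mp (hAn (hBA ha)); omega
  have hBn : ∀ a ∈ B, a ≤ n := fun a ha => (mem_Icc.mp (hAn (hBA ha))).2
  set X := Ioc 0 ⌊T⌋₊ with hX
  set Y := (range (n+1)).filter Nat.Prime with hY
  have hYc : ∀ m, ((range (m+1)).filter Nat.Prime).card = Nat.primeCounting m := by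
    intro m
    rw [Nat.primeCounting, Nat.primeCounting', Nat.count_eq_card_filter_range]
  have main := lemA (RR_C6F hA hBA hB).flip X Y
  have hc : B.card ≤ ∑ y ∈ Y, (X.filter (fun x => RR B y x)).card := by
    rw [card_eq_sum_card_fiberwise (f := fun a => (dec a).1) (t := Y)]
    · apply sum_le_sum
      intro p hpY
      apply card_le_card_of_injOn (fun a => (dec a).2)
      · intro a ha
        have ha' : a ∈ B ∧ (dec a).1 = p := by simpa using ha
        obtain ⟨haB, rfl⟩ := ha'
        have h1 := (dec_spec (hB a haB)).1
        have h2 := hl a haB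
        have h3 := hBn a haB
        have hv0 : 0 < (dec a).2 := by
          rcases Nat.eq_zero_or_pos (dec a).2 with h0 | h0
          · rw [h0] at h1; have := hB a haB; omega
          · exact h0
        have hv : (dec a).2 ^ 3 ≤ n := by
          by_contra hcon
          push Not at hcon
          have h4 : n ^ 2 * n < (dec a).1 ^ 3 * (dec a).2 ^ 3 := Nat.mul_lt_mul'' h2 hcon
          rw [← mul_pow, ← h1] at h4
          have h5 : a ^ 3 ≤ n ^ 3 := Nat.pow_le_pow_left h3 3
          have : n ^ 2 * n = n ^ 3 := by ring
          omega
        simp only [coe_filter, Set.mem_ofPred_eq, hX, mem_Ioc]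
        refine ⟨⟨hv0, ?_⟩, a, haB, rfl⟩
        apply Nat.le_floor
        refine le_of_pow_le_pow_left₀ (n := 3) (by norm_num) hT ?_
        rw [hTn]
        exact_mod_cast hv
      · intro a ha b hb hab
        have ha' : a ∈ B ∧ (dec a).1 = p := by simpa using ha
        have hb' : b ∈ B ∧ (dec b).1 = p := by simpa using hb
        apply dec_inj hB ha'.1 hb'.1
        ext
        · rw [ha'.2, hb'.2]
        · exact hab
    · intro a ha
      have haB : a ∈ B := ha
      have h1 := (dec_spec (hB a haB)).1
      have h3 := hBn a haB
      simp only [hY, coe_filter, mem_range, Set.mem_ofPred_eq]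
      refine ⟨?_, hp a haB⟩
      have : (dec a).1 ≤ a := Nat.le_of_dvd (Nat.pos_of_ne_zero (hB a haB)) ⟨_, h1⟩
      omega
  have hmin : ∑ y ∈ Y, min (X.filter (fun x => RR B y x)).card 2 ≤ 
      Nat.primeCounting n + Nat.primeCounting (n/2) := by
    calc _ ≤ ∑ y ∈ Y, (1 + if y ≤ n / 2 then 1 else 0) := by
          apply sum_le_sum
          intro p hpY
          split_ifs with hpn
          · omega
          · refine (min_le_left _ _).trans ?_
            rw [add_zero, card_le_one]
            have : ∀ x ∈ X.filter (fun x => RR B p x), x = 1 := by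
              intro x hx
              simp only [mem_filter, hX, mem_Ioc] at hx
              obtain ⟨⟨hx0, _⟩, a, haB, hda⟩ := hx
              have h1 := (dec_spec (hB a haB)).1
              rw [hda] at h1
              simp only at h1
              have h3 := hBn a haB
              by_contra hx1
              have : p * 2 ≤ p * x := Nat.mul_le_mul_left p (by omega)
              omega
            intro x hx x' hx'
            rw [this x hx, this x' hx']
      _ = _ := by
          rw [sum_add_distrib, ← hYc n, ← hYc (n/2), ← card_filter]
          simp only [sum_const, smul_eq_mul, mul_one]
          congr 2
          ext p
          simp only [hY, mem_filter, mem_range]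
          constructor
          · rintro ⟨⟨_, h1⟩, h2⟩; exact ⟨by omega, h1⟩
          · rintro ⟨h1, h2⟩; exact ⟨⟨by omega, h2⟩, by omega⟩
  have hXc : ((X.card : ℕ):ℝ) ≤ T := by
    simp only [hX, Nat.card_Ioc, tsub_zero]
    exact Nat.floor_le hT
  have : (B.card : ℝ) ≤ ((Nat.primeCounting n + Nat.primeCounting (n/2) + 2 * X.card ^ 2 : ℕ) : ℝ) := by
    exact_mod_cast hc.trans (main.trans (by gcongr))
  refine this.trans ?_
  push_cast
  gcongr

lemma count_z {z : ℝ} (hz : 0 < z) (hz3 : z ^ 3 ≤ 2) (hz1 : z ≤ 1) :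
    ∃ C : ℝ, 0 < C ∧ ∃ x₀ : ℕ, 3 ≤ x₀ ∧ ∀ T : ℝ, x₀ ≤ T → ∀ W : ℝ, 2 * T ≤ W → ∀ j : ℕ,
      (((Ioc 0 ⌊W⌋₊).filter (fun u => ArithmeticFunction.cardFactors u = j)).card : ℝ) ≤
        C * W * Real.log T ^ (z - 1) * (z ^ j)⁻¹ := by
  obtain ⟨C, hC, x₀, h⟩ := sum_FF_le hz hz3
  refine ⟨C, hC, max x₀ 3, le_max_right _ _, fun T hT W hW j => ?_⟩
  have hT3 : (3:ℝ) ≤ T := le_trans (by exact_mod_cast le_max_right _ _) hT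
  have hTx : (x₀:ℝ) ≤ T := le_trans (by exact_mod_cast le_max_left _ _) hT
  have hfl : T ≤ ⌊W⌋₊ := by
    have := Nat.lt_floor_add_one W
    linarith
  have hlogT : 0 < Real.log T := Real.log_pos (by linarith)
  have h1 := h ⌊W⌋₊ (by exact_mod_cast hTx.trans hfl)
  have h2 : (((Ioc 0 ⌊W⌋₊).filter (fun u => ArithmeticFunction.cardFactors u = j)).card : ℝ) * z ^ j 
      ≤ ∑ n ∈ Ioc 0 ⌊W⌋₊, FF z n := by
    calc _ = ∑ n ∈ (Ioc 0 ⌊W⌋₊).filter (fun u => ArithmeticFunction.cardFactors u = j), FF z n := by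
          rw [← nsmul_eq_mul, ← sum_const]
          apply sum_congr rfl
          intro u hu
          simp only [mem_filter, mem_Ioc] at hu
          rw [FF_apply z (by omega), hu.2]
      _ ≤ _ := by
          apply sum_le_sum_of_subset_of_nonneg (filter_subset _ _)
          intro i _ _
          exact FF_nonneg hz i
  rw [← div_eq_mul_inv, le_div_iff₀ (by positivity)]
  refine h2.trans (h1.trans ?_)
  have h3 : Real.log ⌊W⌋₊ ^ (z - 1) ≤ Real.log T ^ (z - 1) := by
    apply Real.rpow_le_rpow_of_nonpos hlogT
    · exact Real.log_le_log (by linarith) hfl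
    · linarith
  have h4 : ((⌊W⌋₊ : ℕ) : ℝ) ≤ W := Nat.floor_le (by linarith)
  have h5 : 0 ≤ Real.log ⌊W⌋₊ ^ (z - 1) := by
    have := Real.log_natCast_nonneg ⌊W⌋₊
    positivity
  have h6 : 0 ≤ W := by linarith
  gcongr

lemma count_y {y : ℝ} (hz3 : y ^ 3 ≤ 2) (hy1 : 1 ≤ y) :
    ∃ C : ℝ, 0 < C ∧ ∃ x₀ : ℕ, 3 ≤ x₀ ∧ ∀ T : ℝ, x₀ ≤ T → ∀ V : ℝ, T ≤ V → V ≤ T ^ 3 → ∀ k : ℕ,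
      (((Ioc 0 ⌊V⌋₊).filter (fun u => k ≤ ArithmeticFunction.cardFactors u + 2)).card : ℝ) ≤
        C * V * Real.log T ^ (y - 1) * (y ^ k)⁻¹ := by
  have hy : 0 < y := by linarith
  obtain ⟨C, hC, x₀, h⟩ := sum_FF_le hy hz3
  refine ⟨C * 3 ^ (y - 1) * y ^ 2, by positivity, max x₀ 3, le_max_right _ _, fun T hT V hV hV3 k => ?_⟩
  have hT3 : (3:ℝ) ≤ T := le_trans (by exact_mod_cast le_max_right _ _) hT
  have hTx : (x₀:ℝ) ≤ T := le_trans (by exact_mod_cast le_max_left _ _) hT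
  have hlogT : 0 < Real.log T := Real.log_pos (by linarith)
  have h1 := h ⌊V⌋₊ (Nat.le_floor (hTx.trans hV))
  have h2 : (((Ioc 0 ⌊V⌋₊).filter (fun u => k ≤ ArithmeticFunction.cardFactors u + 2)).card : ℝ) 
      * y ^ k ≤ (∑ n ∈ Ioc 0 ⌊V⌋₊, FF y n) * y ^ 2 := by
    calc _ ≤ ∑ n ∈ (Ioc 0 ⌊V⌋₊).filter (fun u => k ≤ ArithmeticFunction.cardFactors u + 2), 
            FF y n * y ^ 2 := by
          rw [← nsmul_eq_mul, ← sum_const]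
          apply sum_le_sum
          intro u hu
          simp only [mem_filter, mem_Ioc] at hu
          rw [FF_apply y (by omega), ← pow_add]
          exact pow_le_pow_right₀ hy1 hu.2
      _ ≤ _ := by
          rw [sum_mul]
          apply sum_le_sum_of_subset_of_nonneg (filter_subset _ _)
          intro i _ _
          have := FF_nonneg hy i
          positivity
  rw [← div_eq_mul_inv, le_div_iff₀ (by positivity)]
  refine h2.trans ?_
  have hfl : (3:ℝ) ≤ ⌊V⌋₊ := by exact_mod_cast Nat.le_floor (by push_cast; linarith)
  have h4 : ((⌊V⌋₊ : ℕ) : ℝ) ≤ V := Nat.floor_le (by linarith)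
  have h3 : Real.log ⌊V⌋₊ ≤ 3 * Real.log T := by
    rw [show 3 * Real.log T = Real.log (T ^ 3) by rw [Real.log_pow]; norm_num]
    exact Real.log_le_log (by linarith) (by linarith)
  have h5 : 0 ≤ Real.log ⌊V⌋₊ := Real.log_natCast_nonneg ⌊V⌋₊
  calc _ ≤ (C * ⌊V⌋₊ * Real.log ⌊V⌋₊ ^ (y - 1)) * y ^ 2 := by gcongr
    _ ≤ (C * V * (3 * Real.log T) ^ (y - 1)) * y ^ 2 := by
        have : 0 ≤ y - 1 := by linarith
        have h6 : 0 ≤ V := by linarith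
        gcongr
    _ = _ := by
        rw [Real.mul_rpow (by norm_num) hlogT.le]; ring

set_option maxHeartbeats 2000000 in
lemma main_bound : ∃ D : ℝ, 0 < D ∧ ∃ x₀ : ℕ, 3 ≤ x₀ ∧ ∀ n : ℕ, ∀ T : ℝ, x₀ ≤ T → T ^ 3 = n → 
    ∀ A : Finset ℕ, A ⊆ Icc 1 n → MulSidon3 A → ∀ y : ℝ, y = (2:ℝ) ^ ((1:ℝ)/3) → 
    ∀ J : ℕ, Real.log T ≤ y ^ (2 * (J + 1)) →
    (A.card : ℝ) ≤ Nat.primeCounting n + Nat.primeCounting (n / 2) + 38 * T ^ 2 + 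
      12 * ((J + 2) * ((3 * Real.log T) * (D * T ^ 2 * Real.log T ^ (y - 4/3)) + 6 * T ^ 2)) := by
  obtain ⟨y, hy⟩ : ∃ y : ℝ, y = (2:ℝ) ^ ((1:ℝ)/3) := ⟨_, rfl⟩
  have hy3 : y ^ 3 = 2 := by
    rw [hy, ← Real.rpow_natCast, ← Real.rpow_mul (by norm_num)]; norm_num
  have hy1 : 1 ≤ y := by rw [hy]; exact Real.one_le_rpow (by norm_num) (by norm_num)
  have hy2 : y ≤ 2 := by nlinarith [sq_nonneg (y - 1), sq_nonneg y]
  have hz3 : (y / 2) ^ 3 ≤ 2 := by rw [div_pow, hy3]; norm_num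
  obtain ⟨C, hC, x₁, hx₁, hcz⟩ := count_z (z := y / 2) (by linarith) hz3 (by linarith)
  obtain ⟨C', hC', x₂, hx₂, hcy⟩ := count_y hy3.le hy1
  set M := 2 * (C + 1) * C' with hM
  have hM0 : 0 < M := by positivity
  refine ⟨M ^ ((2:ℝ)/3), by positivity, max x₁ x₂, le_max_of_le_left hx₁, ?_⟩
  intro n T hT hTn A hAn hA y' hy' J hJ
  have hyy : y' = y := by rw [hy', hy]
  rw [hyy] at hJ ⊢
  clear hyy hy' y'
  have hT1 : (x₁:ℝ) ≤ T := le_trans (by exact_mod_cast le_max_left _ _) hT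
  have hT2 : (x₂:ℝ) ≤ T := le_trans (by exact_mod_cast le_max_right _ _) hT
  have hT3 : (3:ℝ) ≤ T := le_trans (by exact_mod_cast hx₁) hT1
  have hT0 : 0 < T := by linarith
  set l := Real.log T with hl
  have hl1 : 1 ≤ l := by
    rw [hl, Real.le_log_iff_exp_le hT0]
    have := Real.exp_one_lt_d9
    linarith
  have hl0 : 0 < l := by linarith
  have hA0 : ∀ a ∈ A, a ≠ 0 := fun a ha => by
    have := mem_Icc.mp (hAn ha); omega
  have hA1 : ∀ a ∈ A, a ≤ n := fun a ha => (mem_Icc.mp (hAn ha)).2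
  have hcube : ∀ a ∈ A, ∀ u : ℕ, u ^ 3 ≤ n ^ 2 → (u : ℝ) ≤ T ^ 2 := by
    intro a ha u hu
    refine le_of_pow_le_pow_left₀ (n := 3) (by norm_num) (by positivity) ?_
    have : ((u:ℝ)) ^ 3 ≤ (n:ℝ) ^ 2 := by exact_mod_cast hu
    rw [← hTn] at this
    calc _ ≤ _ := this
      _ = _ := by ring
  have hpos : ∀ a ∈ A, 0 < (dec a).1 ∧ 0 < (dec a).2 := by
    intro a ha
    have h1 := (dec_spec (hA0 a ha)).1
    have h2 := hA0 a ha
    constructor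
    · rcases Nat.eq_zero_or_pos (dec a).1 with h0 | h0
      · rw [h0, zero_mul] at h1; exact absurd h1 h2
      · exact h0
    · rcases Nat.eq_zero_or_pos (dec a).2 with h0 | h0
      · rw [h0, mul_zero] at h1; exact absurd h1 h2
      · exact h0
  have hv : ∀ a ∈ A, ((dec a).2 : ℝ) ≤ T ^ 2 := by
    intro a ha
    exact hcube a ha _ ((dec_spec (hA0 a ha)).2.2.1.trans (Nat.pow_le_pow_left (hA1 a ha) 2))
  have hprod : ∀ a ∈ A, ((dec a).1 : ℝ) * (dec a).2 ≤ T ^ 3 := by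
    intro a ha
    rw [hTn]
    have h1 := (dec_spec (hA0 a ha)).1
    have h2 := hA1 a ha
    rw [h1] at h2
    exact_mod_cast h2
  -- prime piece
  set Bp := A.filter (fun a => (dec a).1.Prime ∧ n ^ 2 < (dec a).1 ^ 3) with hBp
  have bp := prime_piece hA (filter_subset _ _ : Bp ⊆ A) n hAn
    (fun a ha => (mem_filter.mp ha).2.1) (fun a ha => (mem_filter.mp ha).2.2) T hT0.le hTn
  -- small piece
  set Bs := A.filter (fun a => ((dec a).1 : ℝ) ≤ T) with hBs
  have bs : (Bs.card : ℝ) ≤ 36 * T ^ 2 := by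
    have hp := piece hA (filter_subset _ _ : Bs ⊆ A) (fun a ha => hA0 a (filter_subset _ _ ha))
      (Ioc 0 ⌊T⌋₊) (Ioc 0 ⌊T ^ 2⌋₊)
      (fun a ha => mem_Ioc.mpr ⟨(hpos a (filter_subset _ _ ha)).1, Nat.le_floor (mem_filter.mp ha).2⟩)
      (fun a ha => mem_Ioc.mpr ⟨(hpos a (filter_subset _ _ ha)).2, 
        Nat.le_floor (hv a (filter_subset _ _ ha))⟩)
    simp only [Nat.card_Ioc, tsub_zero] at hp
    have f1 : ((⌊T⌋₊ : ℕ) : ℝ) ≤ T := Nat.floor_le hT0.le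
    have f2 : ((⌊T ^ 2⌋₊ : ℕ) : ℝ) ≤ T ^ 2 := Nat.floor_le (by positivity)
    have f3 : ((⌊T⌋₊ : ℝ) * ⌊T ^ 2⌋₊) ^ ((2:ℝ)/3) ≤ T ^ 2 := by
      calc _ ≤ (T * T ^ 2) ^ ((2:ℝ)/3) := by gcongr
        _ = (T ^ (3:ℝ)) ^ ((2:ℝ)/3) := by 
            congr 1
            rw [← pow_succ', ← Real.rpow_natCast]; norm_num
        _ = T ^ 2 := by
            rw [← Real.rpow_mul hT0.le, ← Real.rpow_natCast]; norm_num
    nlinarith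
  -- other pieces
  set B : ℕ × ℕ → Finset ℕ := fun q => A.filter (fun a => T * 2 ^ q.1 < (dec a).1 ∧ 
    ((dec a).1 : ℝ) ≤ 2 * T * 2 ^ q.1 ∧ 
    (q.2 ≤ J → ArithmeticFunction.cardFactors (dec a).1 = q.2) ∧
    (J < q.2 → J < ArithmeticFunction.cardFactors (dec a).1)) with hBdef
  set I := Nat.log 2 ⌊T⌋₊ + 1 with hI
  have hflT : ⌊T⌋₊ ≠ 0 := by
    have : 1 ≤ ⌊T⌋₊ := Nat.le_floor (by push_cast; linarith)
    omega
  have hiI : ∀ i : ℕ, i < I → (2:ℝ) ^ i ≤ T := by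
    intro i hi
    have : 2 ^ i ≤ ⌊T⌋₊ := by
      apply Nat.pow_le_of_le_log hflT; omega
    calc (2:ℝ) ^ i ≤ ⌊T⌋₊ := by exact_mod_cast this
      _ ≤ T := Nat.floor_le hT0.le
  have hIi : ∀ i : ℕ, (2:ℝ) ^ i ≤ T → i < I := by
    intro i hi
    have : 2 ^ i ≤ ⌊T⌋₊ := Nat.le_floor (by exact_mod_cast hi)
    have := Nat.le_log_of_pow_le (b := 2) (by norm_num) this
    omega
  have hcover : A ⊆ Bp ∪ (Bs ∪ (range I ×ˢ range (J + 2)).biUnion B) := by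
    intro a ha
    simp only [mem_union]
    by_cases h1 : a ∈ Bp
    · exact Or.inl h1
    by_cases h2 : a ∈ Bs
    · exact Or.inr (Or.inl h2)
    right; right
    simp only [hBp, hBs, mem_filter, not_and, not_lt, not_le] at h1 h2
    have hu2 := h2 ha
    have hu : (dec a).1 ^ 3 ≤ n ^ 2 := by
      rcases (dec_spec (hA0 a ha)).2.1 with h | h
      · exact h1 ha h
      · exact h.trans (Nat.pow_le_pow_left (hA1 a ha) 2)
    have hu3 := hcube a ha _ hu
    have hex : ∃ i : ℕ, ((dec a).1 : ℝ) ≤ 2 * T * 2 ^ i := by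
      obtain ⟨i, hi⟩ := pow_unbounded_of_one_lt T (by norm_num : (1:ℝ) < 2)
      refine ⟨i, hu3.trans ?_⟩
      nlinarith
    obtain ⟨i, hi, himin⟩ : ∃ i : ℕ, ((dec a).1 : ℝ) ≤ 2 * T * 2 ^ i ∧ T * 2 ^ i < (dec a).1 := by
      refine ⟨Nat.find hex, Nat.find_spec hex, ?_⟩
      rcases Nat.eq_zero_or_pos (Nat.find hex) with h0 | h0
      · rw [h0]; simpa using hu2
      · have := Nat.find_min hex (m := Nat.find hex - 1) (by omega)
        push Not at this
        obtain ⟨k, hk⟩ : ∃ k, Nat.find hex = k + 1 := ⟨Nat.find hex - 1, by omega⟩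
        rw [hk] at this ⊢
        simp only [add_tsub_cancel_right] at this
        rw [pow_succ]; linarith
    have hii : i < I := by
      apply hIi
      have : T * 2 ^ i ≤ T * T := by nlinarith
      exact le_of_mul_le_mul_left this hT0
    simp only [mem_biUnion, mem_product, mem_range, hBdef, mem_filter]
    by_cases hj : ArithmeticFunction.cardFactors (dec a).1 ≤ J
    · exact ⟨(i, ArithmeticFunction.cardFactors (dec a).1), ⟨hii, by omega⟩, ha, himin, hi,
        fun _ => rfl, fun h => h⟩
    · exact ⟨(i, J + 1), ⟨hii, by omega⟩, ha, himin, hi, fun h => by simp at h, 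
        fun _ => by omega⟩
  have bB : ∀ q ∈ range I ×ˢ range (J + 2), ((B q).card : ℝ) ≤ 
      12 * ((M ^ ((2:ℝ)/3) * T ^ 2 * l ^ (y - 4/3)) + 2 * T * 2 ^ q.1 + T ^ 2 * (1 / 2) ^ q.1) := by
    rintro ⟨i, j⟩ hq
    simp only [mem_product, mem_range] at hq
    simp only
    have hBA : B (i, j) ⊆ A := filter_subset _ _
    set W := 2 * T * 2 ^ i with hW
    set V := T ^ 2 * (1 / 2) ^ i with hV
    have h2i : (1:ℝ) ≤ 2 ^ i := one_le_pow₀ (by norm_num)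
    have hhalf : ((1:ℝ)/2) ^ i * 2 ^ i = 1 := by rw [← mul_pow]; norm_num
    have hh0 : (0:ℝ) < (1/2) ^ i := by positivity
    have hh1 : ((1:ℝ)/2) ^ i ≤ 1 := pow_le_one₀ (by norm_num) (by norm_num)
    have hWT : 2 * T ≤ W := by rw [hW]; nlinarith
    have hiT := hiI i hq.1
    have hVT : T ≤ V := by
      have : 1 ≤ T * (1/2) ^ i := by
        calc (1:ℝ) = (1/2) ^ i * 2 ^ i := hhalf.symm
          _ ≤ (1/2) ^ i * T := by gcongr
          _ = T * (1/2) ^ i := by ring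
      rw [hV]; nlinarith
    have hVT3 : V ≤ T ^ 3 := by
      rw [hV]
      calc T ^ 2 * (1 / 2) ^ i ≤ T ^ 2 * 1 := by gcongr
        _ ≤ T ^ 2 * T := by gcongr; linarith
        _ = _ := by ring
    have hWV : W * V = 2 * T ^ 3 := by
      rw [hW, hV]
      calc _ = 2 * T ^ 3 * ((1/2) ^ i * 2 ^ i) := by ring
        _ = _ := by rw [hhalf, mul_one]
    have hW0 : 0 < W := by linarith
    have hV0 : 0 < V := by linarith
    -- memberships
    have m1 : ∀ a ∈ B (i, j), (dec a).1 ∈ Ioc 0 ⌊W⌋₊ := fun a ha => 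
      mem_Ioc.mpr ⟨(hpos a (hBA ha)).1, Nat.le_floor (mem_filter.mp ha).2.2.1⟩
    have m2 : ∀ a ∈ B (i, j), (dec a).2 ∈ Ioc 0 ⌊V⌋₊ := fun a ha => by
      refine mem_Ioc.mpr ⟨(hpos a (hBA ha)).2, Nat.le_floor ?_⟩
      have h1 := (mem_filter.mp ha).2.1
      have h2 := hprod a (hBA ha)
      simp only at h1
      have h3 : T * 2 ^ i * (dec a).2 ≤ T ^ 3 := 
        le_trans (mul_le_mul_of_nonneg_right h1.le (by positivity)) h2
      have h4 : (2:ℝ) ^ i * (dec a).2 ≤ T ^ 2 := by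
        apply le_of_mul_le_mul_left _ hT0
        linarith
      calc ((dec a).2 : ℝ) = (1/2) ^ i * (2 ^ i * (dec a).2) := by
            rw [← mul_assoc, hhalf, one_mul]
        _ ≤ (1/2) ^ i * T ^ 2 := by gcongr
        _ = V := by rw [hV]; ring
    have fin : ∀ X Y : Finset ℕ, (∀ a ∈ B (i, j), (dec a).1 ∈ X) → (∀ a ∈ B (i, j), (dec a).2 ∈ Y) →
        X ⊆ Ioc 0 ⌊W⌋₊ → Y ⊆ Ioc 0 ⌊V⌋₊ → 
        (X.card : ℝ) * Y.card ≤ M * T ^ 3 * (l ^ (y / 2 - 1) * l ^ (y - 1)) →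
        ((B (i, j)).card : ℝ) ≤ 12 * ((M ^ ((2:ℝ)/3) * T ^ 2 * l ^ (y - 4/3)) + W + V) := by
      intro X Y hX hY hXW hYV hXY
      refine (piece hA hBA (fun a ha => hA0 a (hBA ha)) X Y hX hY).trans ?_
      have c1 : (X.card : ℝ) ≤ W := by
        have h1 := card_le_card hXW
        simp only [Nat.card_Ioc, tsub_zero] at h1
        calc (X.card : ℝ) ≤ ⌊W⌋₊ := by exact_mod_cast h1
          _ ≤ W := Nat.floor_le hW0.le
      have c2 : (Y.card : ℝ) ≤ V := by
        have h1 := card_le_card hYV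
        simp only [Nat.card_Ioc, tsub_zero] at h1
        calc (Y.card : ℝ) ≤ ⌊V⌋₊ := by exact_mod_cast h1
          _ ≤ V := Nat.floor_le hV0.le
      have c3 : ((X.card : ℝ) * Y.card) ^ ((2:ℝ)/3) ≤ M ^ ((2:ℝ)/3) * T ^ 2 * l ^ (y - 4/3) := by
        calc _ ≤ (M * T ^ 3 * (l ^ (y / 2 - 1) * l ^ (y - 1))) ^ ((2:ℝ)/3) := by gcongr
          _ = M ^ ((2:ℝ)/3) * (T ^ 3) ^ ((2:ℝ)/3) * (l ^ (y / 2 - 1) * l ^ (y - 1)) ^ ((2:ℝ)/3) := by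
              rw [Real.mul_rpow (by positivity) (by positivity), Real.mul_rpow (by positivity) (by positivity)]
          _ = _ := by
              congr 1
              · congr 1
                rw [← Real.rpow_natCast T 3, ← Real.rpow_mul hT0.le, ← Real.rpow_natCast T 2]
                norm_num
              · rw [← Real.rpow_add hl0, ← Real.rpow_mul hl0.le]
                congr 1; ring
      linarith
    by_cases hj : j ≤ J
    · have hcz' := hcz T hT1 W hWT j
      have hcy' := hcy T hT2 V hVT hVT3 (2 * j)
      apply fin ((Ioc 0 ⌊W⌋₊).filter (fun u => ArithmeticFunction.cardFactors u = j)) 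
        ((Ioc 0 ⌊V⌋₊).filter (fun u => 2 * j ≤ ArithmeticFunction.cardFactors u + 2))
      · intro a ha
        exact mem_filter.mpr ⟨m1 a ha, (mem_filter.mp ha).2.2.2.1 hj⟩
      · intro a ha
        refine mem_filter.mpr ⟨m2 a ha, ?_⟩
        have h1 := (mem_filter.mp ha).2.2.2.1 hj
        have h2 := (dec_spec (hA0 a (hBA ha))).2.2.2
        simp only at h1
        omega
      · exact filter_subset _ _
      · exact filter_subset _ _
      · calc _ ≤ (C * W * l ^ (y / 2 - 1) * ((y/2) ^ j)⁻¹) * (C' * V * l ^ (y - 1) * (y ^ (2 * j))⁻¹) := by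
              gcongr
          _ = C * C' * (W * V) * (l ^ (y / 2 - 1) * l ^ (y - 1)) * (((y/2) ^ j) * (y ^ (2 * j)))⁻¹ := by
              rw [mul_inv]; ring
          _ = C * C' * (W * V) * (l ^ (y / 2 - 1) * l ^ (y - 1)) := by
              have : ((y/2) ^ j) * (y ^ (2 * j)) = 1 := by
                rw [pow_mul, ← mul_pow]
                have : y / 2 * y ^ 2 = 1 := by linarith [hy3, (by ring : y / 2 * y ^ 2 = y ^ 3 / 2)]
                rw [this, one_pow]
              rw [this]; simp
          _ ≤ _ := by
              rw [hWV, hM]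
              have : 2 * C * C' * T ^ 3 * (l ^ (y / 2 - 1) * l ^ (y - 1)) ≤ 
                2 * (C + 1) * C' * T ^ 3 * (l ^ (y / 2 - 1) * l ^ (y - 1)) := by
                gcongr
                linarith
              linarith
    · have hcy' := hcy T hT2 V hVT hVT3 (2 * (J + 1))
      apply fin (Ioc 0 ⌊W⌋₊) 
        ((Ioc 0 ⌊V⌋₊).filter (fun u => 2 * (J + 1) ≤ ArithmeticFunction.cardFactors u + 2))
      · exact m1
      · intro a ha
        refine mem_filter.mpr ⟨m2 a ha, ?_⟩
        have h1 := (mem_filter.mp ha).2.2.2.2 (by simpa using hj)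
        have h2 := (dec_spec (hA0 a (hBA ha))).2.2.2
        omega
      · exact subset_rfl
      · exact filter_subset _ _
      · have c1 : ((Ioc 0 ⌊W⌋₊).card : ℝ) ≤ W := by
          simp only [Nat.card_Ioc, tsub_zero]
          exact Nat.floor_le hW0.le
        have c2 : (y ^ (2 * (J + 1)))⁻¹ ≤ l ^ (y / 2 - 1) := by
          calc _ ≤ l⁻¹ := inv_anti₀ hl0 hJ
            _ = l ^ (-1:ℝ) := by rw [Real.rpow_neg_one]
            _ ≤ _ := Real.rpow_le_rpow_of_exponent_le hl1 (by linarith)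
        calc _ ≤ W * (C' * V * l ^ (y - 1) * l ^ (y / 2 - 1)) := by
              refine mul_le_mul c1 (hcy'.trans ?_) (by positivity) hW0.le
              gcongr
          _ = 2 * 1 * C' * T ^ 3 * (l ^ (y / 2 - 1) * l ^ (y - 1)) := by
              calc _ = C' * (W * V) * (l ^ (y / 2 - 1) * l ^ (y - 1)) := by ring
                _ = _ := by rw [hWV]; ring
          _ ≤ _ := by
              rw [hM]
              gcongr
              linarith
  -- summation
  have hIl : (I : ℝ) ≤ 3 * l := by
    have h1 := hiI (Nat.log 2 ⌊T⌋₊) (by omega)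
    have h2 := Real.log_le_log (by positivity) h1
    rw [Real.log_pow] at h2
    have h3 := Real.log_two_gt_d9
    have h4 : (0:ℝ) ≤ (Nat.log 2 ⌊T⌋₊ : ℕ) := by positivity
    have h5 : ((Nat.log 2 ⌊T⌋₊ : ℕ):ℝ) ≤ 2 * l := by nlinarith
    rw [hI]; push_cast; linarith
  have g1 : ∑ i ∈ range I, (2:ℝ) ^ i ≤ 2 * T := by
    rw [geom_sum_eq (by norm_num)]
    have h1 := hiI (Nat.log 2 ⌊T⌋₊) (by omega)
    rw [hI, pow_succ]; linarith
  have g2 : ∑ i ∈ range I, ((1:ℝ)/2) ^ i ≤ 2 := sum_geometric_two_le I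
  have bsum : (((range I ×ˢ range (J + 2)).biUnion B).card : ℝ) ≤
      12 * ((J + 2) * ((3 * l) * (M ^ ((2:ℝ)/3) * T ^ 2 * l ^ (y - 4/3)) + 6 * T ^ 2)) := by
    set K := M ^ ((2:ℝ)/3) * T ^ 2 * l ^ (y - 4/3) with hK
    have hK0 : 0 ≤ K := by positivity
    calc (((range I ×ˢ range (J + 2)).biUnion B).card : ℝ) ≤ 
          ∑ q ∈ range I ×ˢ range (J + 2), ((B q).card : ℝ) := by exact_mod_cast card_biUnion_le
      _ ≤ ∑ q ∈ range I ×ˢ range (J + 2), 12 * (K + 2 * T * 2 ^ q.1 + T ^ 2 * (1 / 2) ^ q.1) := 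
          sum_le_sum bB
      _ = 12 * ((J + 2) * (I * K + 2 * T * ∑ i ∈ range I, (2:ℝ) ^ i + 
            T ^ 2 * ∑ i ∈ range I, ((1:ℝ)/2) ^ i)) := by
          rw [sum_product]
          simp only [sum_const, card_range, nsmul_eq_mul, ← mul_sum, sum_add_distrib]
          push_cast
          ring
      _ ≤ 12 * ((J + 2) * ((3 * l) * K + 2 * T * (2 * T) + T ^ 2 * 2)) := by gcongr
      _ = _ := by ring
  have hcard : (A.card : ℝ) ≤ Bp.card + (Bs.card + ((range I ×ˢ range (J + 2)).biUnion B).card) := by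
    have h1 := card_le_card hcover
    have h2 := card_union_le Bp (Bs ∪ (range I ×ˢ range (J + 2)).biUnion B)
    have h3 := card_union_le Bs ((range I ×ˢ range (J + 2)).biUnion B)
    have : A.card ≤ Bp.card + (Bs.card + ((range I ×ˢ range (J + 2)).biUnion B).card) := by omega
    exact_mod_cast this
  linarith

end Assembly

theorem mulSidon3_card_upper_bound_explicit :
    ∃ c : ℝ, 0 < c ∧ ∃ N : ℕ, ∀ n : ℕ, N ≤ n → ∀ A : Finset ℕ, A ⊆ Finset.Icc 1 n →
      MulSidon3 A →
      (A.card : ℝ) ≤ (Nat.primeCounting n : ℝ) + (Nat.primeCounting (n / 2) : ℝ) +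
        c * (n : ℝ) ^ ((2 : ℝ) / 3) *
          Real.log n ^ ((2 : ℝ) ^ ((1 : ℝ) / 3) - 1 / 3) *
          Real.log (Real.log n) ^ (2 : ℕ) := by
  obtain ⟨D, hD, x₀, hx₀, hmain⟩ := main_bound
  refine ⟨38 + 12 * (8 * (3 * D + 6)), by positivity, max (x₀ ^ 3) ⌈Real.exp (Real.exp 1)⌉₊, ?_⟩
  intro n hn A hAn hA
  have hn1 : x₀ ^ 3 ≤ n := (le_max_left _ _).trans hn
  have hn2 : Real.exp (Real.exp 1) ≤ n := 
    (Nat.le_ceil _).trans (by exact_mod_cast (le_max_right _ _).trans hn)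
  have hn0 : (0:ℝ) < n := (Real.exp_pos _).trans_le hn2
  obtain ⟨y, hy⟩ : ∃ y : ℝ, y = (2:ℝ) ^ ((1:ℝ)/3) := ⟨_, rfl⟩
  have hy3 : y ^ 3 = 2 := by
    rw [hy, ← Real.rpow_natCast, ← Real.rpow_mul (by norm_num)]; norm_num
  have hy1 : 1 ≤ y := by rw [hy]; exact Real.one_le_rpow (by norm_num) (by norm_num)
  rw [← hy]
  set T : ℝ := (n:ℝ) ^ ((1:ℝ)/3) with hTdef
  have hT0 : 0 < T := by positivity
  have hT3 : T ^ 3 = n := by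
    rw [hTdef, ← Real.rpow_natCast, ← Real.rpow_mul hn0.le]; norm_num
  have hT2 : T ^ 2 = (n:ℝ) ^ ((2:ℝ)/3) := by
    rw [hTdef, ← Real.rpow_natCast, ← Real.rpow_mul hn0.le]; norm_num
  have hxT : (x₀:ℝ) ≤ T := by
    refine le_of_pow_le_pow_left₀ (n := 3) (by norm_num) hT0.le ?_
    rw [hT3]; exact_mod_cast hn1
  have hl : Real.log n = 3 * Real.log T := by
    rw [← hT3, Real.log_pow]; norm_num
  have hlog : Real.exp 1 ≤ Real.log n := by
    rw [Real.le_log_iff_exp_le hn0]; exact hn2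
  have hlog0 : 0 < Real.log n := (Real.exp_pos _).trans_le hlog
  set L := Real.log (Real.log n) with hL
  have hL1 : 1 ≤ L := by
    rw [hL, Real.le_log_iff_exp_le hlog0]; exact hlog
  set m := ⌈L⌉₊ with hm
  have hmL : L ≤ m := Nat.le_ceil _
  have hmL2 : (m:ℝ) ≤ 2 * L := by
    have := (Nat.ceil_lt_add_one (by linarith : 0 ≤ L)).le
    linarith
  have hT3' : (3:ℝ) ≤ T := le_trans (by exact_mod_cast hx₀) hxT
  have hlT : 1 ≤ Real.log T := by
    rw [Real.le_log_iff_exp_le hT0]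
    have := Real.exp_one_lt_d9
    linarith
  have hJ : Real.log T ≤ y ^ (2 * (3 * m + 1)) := by
    calc Real.log T ≤ Real.log n := by rw [hl]; linarith
      _ = Real.exp L := (Real.exp_log hlog0).symm
      _ ≤ Real.exp m := Real.exp_le_exp.mpr hmL
      _ = (Real.exp 1) ^ m := by rw [← Real.exp_nat_mul]; simp
      _ ≤ 4 ^ m := by
          have := Real.exp_one_lt_d9
          gcongr
          linarith
      _ = y ^ (6 * m) := by
          rw [pow_mul]; congr 1
          calc (4:ℝ) = (y ^ 3) ^ 2 := by rw [hy3]; norm_num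
            _ = _ := by ring
      _ ≤ _ := pow_le_pow_right₀ hy1 (by omega)
  refine (hmain n T hxT hT3 A hAn hA y hy (3 * m) hJ).trans ?_
  set P := Real.log n ^ (y - 1/3) with hP
  have hP1 : 1 ≤ P := Real.one_le_rpow (by rw [hl]; linarith) (by linarith)
  have e1 : Real.log T * Real.log T ^ (y - 4/3) ≤ P := by
    calc _ = Real.log T ^ (y - 1/3) := by
          rw [← Real.rpow_one_add' (by linarith) (by linarith)]
          congr 1; ring
      _ ≤ _ := by
          apply Real.rpow_le_rpow (by linarith) (by rw [hl]; linarith) (by linarith)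
  rw [← hT2]
  have e2 : 3 * Real.log T * (D * T ^ 2 * Real.log T ^ (y - 4/3)) + 6 * T ^ 2 ≤ 
      (3 * D + 6) * (T ^ 2 * P) := by
    calc _ = 3 * D * (T ^ 2 * (Real.log T * Real.log T ^ (y - 4/3))) + 6 * (T ^ 2 * 1) := by ring
      _ ≤ 3 * D * (T ^ 2 * P) + 6 * (T ^ 2 * P) := by gcongr
      _ = _ := by ring
  have hLL : L ≤ L ^ 2 := by nlinarith
  have hL21 : 1 ≤ L ^ 2 := by linarith
  have e3 : ((3 * m : ℕ) : ℝ) + 2 ≤ 8 * L ^ 2 := by push_cast; linarith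
  have e4 : 38 * T ^ 2 ≤ 38 * (T ^ 2 * P * L ^ 2) := by
    have : T ^ 2 * 1 * 1 ≤ T ^ 2 * P * L ^ 2 := by gcongr
    linarith
  have e5 : 12 * ((((3 * m : ℕ) : ℝ) + 2) * (3 * Real.log T * (D * T ^ 2 * Real.log T ^ (y - 4/3)) + 6 * T ^ 2))
      ≤ 12 * ((8 * L ^ 2) * ((3 * D + 6) * (T ^ 2 * P))) := by
    gcongr
  calc _ ≤ (Nat.primeCounting n : ℝ) + (Nat.primeCounting (n / 2) : ℝ) + 38 * (T ^ 2 * P * L ^ 2) +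
        12 * ((8 * L ^ 2) * ((3 * D + 6) * (T ^ 2 * P))) := by linarith
    _ = _ := by ring
end
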